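/- arXiv:1705.00957 — 7 statements merged into one kernel-verified Lean document; each statement's English description precedes it below -/
import Mathlib

section
/- For every real number q with 0 < q < 1 one has q^(1/16) / ∏_{k=0}^∞ (1 − q^(k+1/2)) = (∑_{n∈ℤ} q^((n+1/4)²)) / ∏_{n=1}^∞ (1 − q^n). -/
open scoped BigOperators

/-- Partial products in the Gauss identity. -/
noncomputable def gaussP (x : ℝ) (n : ℕ) : ℝ :=
  ∏ i ∈ Finset.range n, (1 - x ^ (2 * i + 2)) / (1 - x ^ (2 * i + 1))

lemma gaussP_succ (x : ℝ) (n : ℕ) :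
    gaussP x (n + 1) = gaussP x n * ((1 - x ^ (2 * n + 2)) / (1 - x ^ (2 * n + 1))) := by
  rw [gaussP, Finset.prod_range_succ, gaussP]

lemma one_sub_pos' {x : ℝ} (h0 : 0 < x) (h1 : x < 1) (n : ℕ) : 0 < 1 - x ^ (n + 1) := by
  have := pow_lt_one₀ h0.le h1 (Nat.succ_ne_zero n)
  simpa using this

lemma gaussP_ge {x : ℝ} (h0 : 0 < x) (h1 : x < 1) (n : ℕ) : 1 ≤ gaussP x n := by
  induction n with
  | zero => simp [gaussP]
  | succ n ih =>
    rw [gaussP_succ]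
    apply one_le_mul_of_one_le_of_one_le ih
    rw [le_div_iff₀ (one_sub_pos' h0 h1 _), one_mul]
    have : x ^ (2 * n + 2) ≤ x ^ (2 * n + 1) :=
      pow_le_pow_of_le_one h0.le h1.le (by omega)
    linarith

lemma gauss_tele {x : ℝ} (h0 : 0 < x) (h1 : x < 1) (N m : ℕ) :
    ∑ s ∈ Finset.range (m + 1), gaussP x (N + 1) / gaussP x s * x ^ (s * (2 * N + 3)) =
    ∑ s ∈ Finset.range (m + 1), gaussP x N / gaussP x s * x ^ (s * (2 * N + 1)) +
      gaussP x N / gaussP x m * x ^ ((m + 1) * (2 * N + 1)) *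
        ((1 - x ^ (2 * m + 1)) / (1 - x ^ (2 * N + 1))) := by
  have hN := (one_sub_pos' h0 h1 (2 * N)).ne'
  induction m with
  | zero =>
    simp only [zero_add, Finset.sum_range_one, zero_mul, pow_zero, gaussP_succ x N]
    have : gaussP x 0 = 1 := by simp [gaussP]
    rw [this]
    field_simp
    ring
  | succ m ih =>
    rw [Finset.sum_range_succ, ih, Finset.sum_range_succ _ (m + 1), gaussP_succ x N,
      gaussP_succ x m]
    have hm := (one_sub_pos' h0 h1 (2 * m)).ne'
    have hm2 := (one_sub_pos' h0 h1 (2 * m + 1)).ne'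
    have hP : gaussP x m ≠ 0 := (lt_of_lt_of_le one_pos (gaussP_ge h0 h1 m)).ne'
    have e1 : x ^ ((m + 1) * (2 * N + 3)) = x ^ ((m + 1) * (2 * N + 1)) * x ^ (2 * m + 2) := by
      rw [← pow_add]; congr 1; ring
    have e2 : x ^ ((m + 1 + 1) * (2 * N + 1)) =
        x ^ ((m + 1) * (2 * N + 1)) * x ^ (2 * N + 1) := by
      rw [← pow_add]; congr 1; ring
    have e3 : x ^ (2 * (m + 1) + 1) = x ^ (2 * m + 2) * x := by
      rw [← pow_succ]; congr 1
    have e4 : x ^ (2 * N + 2) = x ^ (2 * N + 1) * x := by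
      rw [← pow_succ]
    have hm2' : 1 - x ^ (2 * m + 2) ≠ 0 := hm2
    have e5 : x ^ (2 * m + 2) = x ^ (2 * m + 1) * x := by
      rw [← pow_succ]
    rw [e1, e2, e3, e4]
    generalize x ^ ((m + 1) * (2 * N + 1)) = Y
    rw [add_assoc, add_assoc, add_right_inj]
    generalize x ^ (2 * N + 1) = b at *
    rw [e5] at hm2' ⊢
    generalize x ^ (2 * m + 1) = c at *
    field_simp
    ring

/-- The finite identity of Shanks. -/
lemma gauss_finite {x : ℝ} (h0 : 0 < x) (h1 : x < 1) (N : ℕ) :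
    ∑ s ∈ Finset.range (N + 1), gaussP x N / gaussP x s * x ^ (s * (2 * N + 1)) =
    ∑ s ∈ Finset.range N, (x ^ (s * (2 * s + 1)) + x ^ ((s + 1) * (2 * s + 1)))
      + x ^ (N * (2 * N + 1)) := by
  have hP : ∀ n, gaussP x n ≠ 0 := fun n => (lt_of_lt_of_le one_pos (gaussP_ge h0 h1 n)).ne'
  induction N with
  | zero => simp [gaussP]
  | succ N ih =>
    rw [Finset.sum_range_succ]
    have h := gauss_tele h0 h1 N N
    rw [ih, div_self (hP N), div_self (one_sub_pos' h0 h1 (2 * N)).ne'] at h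
    have e : 2 * (N + 1) + 1 = 2 * N + 3 := by ring
    rw [e, h, div_self (hP _), Finset.sum_range_succ]
    ring

theorem gauss_main {x : ℝ} (h0 : 0 < x) (h1 : x < 1) :
    ∃ S : ℝ, Filter.Tendsto (gaussP x) Filter.atTop (nhds S) ∧
      HasSum (fun n : ℕ => x ^ (n * (2 * n + 1)) + x ^ ((n + 1) * (2 * n + 1))) S := by
  have hg := summable_geometric_of_lt_one h0.le h1
  have s1 : Summable (fun n : ℕ => x ^ (n * (2 * n + 1))) :=
    hg.of_nonneg_of_le (fun n => by positivity)
      (fun n => pow_le_pow_of_le_one h0.le h1.le (by nlinarith))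
  have s2 : Summable (fun n : ℕ => x ^ ((n + 1) * (2 * n + 1))) :=
    hg.of_nonneg_of_le (fun n => by positivity)
      (fun n => pow_le_pow_of_le_one h0.le h1.le (by nlinarith))
  obtain ⟨S, hS⟩ := s1.add s2
  refine ⟨S, ?_, hS⟩
  have hF := hS.tendsto_sum_nat.add s1.tendsto_atTop_zero
  rw [add_zero] at hF
  have hF' := hF.congr (fun N => (gauss_finite h0 h1 N).symm)
  obtain ⟨C, hC⟩ := hF'.bddAbove_range
  -- split off the first term
  have hsplit : ∀ N, ∑ s ∈ Finset.range (N + 1),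
      gaussP x N / gaussP x s * x ^ (s * (2 * N + 1)) =
      (∑ s ∈ Finset.range N, gaussP x N / gaussP x (s + 1) * x ^ ((s + 1) * (2 * N + 1)))
        + gaussP x N := by
    intro N
    rw [Finset.sum_range_succ']
    simp [gaussP]
  have hpos : ∀ n, 0 < gaussP x n := fun n => lt_of_lt_of_le one_pos (gaussP_ge h0 h1 n)
  have hnn : ∀ N, 0 ≤ ∑ s ∈ Finset.range N,
      gaussP x N / gaussP x (s + 1) * x ^ ((s + 1) * (2 * N + 1)) := by
    intro N
    refine Finset.sum_nonneg fun s _ => ?_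
    have := hpos N
    have := hpos (s + 1)
    positivity
  have hPC : ∀ N, gaussP x N ≤ C := by
    intro N
    have := hC ⟨N, rfl⟩
    have h2 := hsplit N
    have h3 := hnn N
    simp only at this
    linarith
  have hC0 : 0 ≤ C := (hpos 0).le.trans (hPC 0)
  have hrest : Filter.Tendsto (fun N : ℕ => ∑ s ∈ Finset.range N,
      gaussP x N / gaussP x (s + 1) * x ^ ((s + 1) * (2 * N + 1))) Filter.atTop (nhds 0) := by
    have hz : Filter.Tendsto (fun N : ℕ => C * ((N : ℝ) * x ^ N)) Filter.atTop (nhds 0) := by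
      simpa using (tendsto_self_mul_const_pow_of_lt_one h0.le h1).const_mul C
    refine squeeze_zero hnn (fun N => ?_) hz
    have : ∀ s ∈ Finset.range N,
        gaussP x N / gaussP x (s + 1) * x ^ ((s + 1) * (2 * N + 1)) ≤ C * x ^ N := by
      intro s _
      apply mul_le_mul
      · exact (div_le_self (hpos N).le (gaussP_ge h0 h1 _)).trans (hPC N)
      · exact pow_le_pow_of_le_one h0.le h1.le (by nlinarith)
      · positivity
      · exact hC0
    calc _ ≤ _ := Finset.sum_le_sum this
      _ = _ := by simp; ring
  have := hF'.sub hrest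
  rw [sub_zero] at this
  refine this.congr fun N => ?_
  rw [hsplit]; ring

/-- Gauss identity: `q^(1/16) / ∏_{k=0}^∞ (1 − q^(k+1/2))
    = (∑_{n∈ℤ} q^((n+1/4)²)) / ∏_{n=1}^∞ (1 − q^n)` for `0 < q < 1`. -/
theorem stmt0 (q : ℝ) (hq0 : 0 < q) (hq1 : q < 1) :
    q ^ ((1 : ℝ) / 16) / ∏' k : ℕ, (1 - q ^ ((k : ℝ) + 1 / 2)) =
      (∑' n : ℤ, q ^ (((n : ℝ) + 1 / 4) ^ 2)) / ∏' n : ℕ, (1 - q ^ (n + 1)) := by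
  obtain ⟨x, h0, h1, rfl⟩ : ∃ x : ℝ, 0 < x ∧ x < 1 ∧ q = x ^ 2 :=
    ⟨√q, Real.sqrt_pos.2 hq0, by rw [Real.sqrt_lt' one_pos]; simpa using hq1,
      (Real.sq_sqrt hq0.le).symm⟩
  obtain ⟨S, hP, hS⟩ := gauss_main h0 h1
  have hrp : ∀ y : ℝ, (x ^ 2) ^ y = x ^ (2 * y) := by
    intro y
    rw [Real.rpow_mul h0.le, Real.rpow_two]
  have hg := summable_geometric_of_lt_one h0.le h1
  have eA : ∀ k : ℕ, 1 - (x ^ 2) ^ ((k : ℝ) + 1 / 2) = 1 - x ^ (2 * k + 1) := by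
    intro k
    rw [hrp, ← Real.rpow_natCast]
    congr 2; push_cast; ring
  have eB : ∀ k : ℕ, 1 - (x ^ 2) ^ (k + 1) = 1 - x ^ (2 * k + 2) := by
    intro k
    rw [← pow_mul]; ring
  simp_rw [eA, eB]
  have mA : Multipliable (fun k : ℕ => 1 - x ^ (2 * k + 1)) := by
    simp_rw [sub_eq_add_neg]
    apply Real.multipliable_one_add_of_summable
    exact (hg.of_nonneg_of_le (fun n => by positivity)
      (fun n => pow_le_pow_of_le_one h0.le h1.le (by omega))).neg
  have mB : Multipliable (fun k : ℕ => 1 - x ^ (2 * k + 2)) := by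
    simp_rw [sub_eq_add_neg]
    apply Real.multipliable_one_add_of_summable
    exact (hg.of_nonneg_of_le (fun n => by positivity)
      (fun n => pow_le_pow_of_le_one h0.le h1.le (by omega))).neg
  have tA := mA.hasProd.tendsto_prod_nat
  have tB := mB.hasProd.tendsto_prod_nat
  have key : S * ∏' k : ℕ, (1 - x ^ (2 * k + 1)) = ∏' k : ℕ, (1 - x ^ (2 * k + 2)) := by
    refine tendsto_nhds_unique (hP.mul tA) (tB.congr fun n => ?_)
    rw [gaussP, ← Finset.prod_mul_distrib]
    refine Finset.prod_congr rfl fun i _ => ?_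
    rw [div_mul_cancel₀ _ (one_sub_pos' h0 h1 _).ne']
  have hS1 : 1 ≤ S := ge_of_tendsto' hP (gaussP_ge h0 h1)
  have s1 : Summable (fun n : ℕ => x ^ (n * (2 * n + 1))) :=
    hg.of_nonneg_of_le (fun n => by positivity)
      (fun n => pow_le_pow_of_le_one h0.le h1.le (by nlinarith))
  have s2 : Summable (fun n : ℕ => x ^ ((n + 1) * (2 * n + 1))) :=
    hg.of_nonneg_of_le (fun n => by positivity)
      (fun n => pow_le_pow_of_le_one h0.le h1.le (by nlinarith))
  have hT : HasSum (fun n : ℤ => (x ^ 2) ^ (((n : ℝ) + 1 / 4) ^ 2))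
      ((x ^ 2) ^ ((1 : ℝ) / 16) * S) := by
    rw [hS.unique (s1.hasSum.add s2.hasSum), mul_add]
    apply HasSum.of_nat_of_neg_add_one
    · have h := s1.hasSum.mul_left ((x ^ 2) ^ ((1 : ℝ) / 16))
      refine Eq.mp (congrArg (fun f => HasSum f _) (funext fun n => ?_)) h
      symm
      rw [hrp, hrp, ← Real.rpow_natCast x, ← Real.rpow_add h0]
      congr 1; push_cast; ring
    · have h := s2.hasSum.mul_left ((x ^ 2) ^ ((1 : ℝ) / 16))
      refine Eq.mp (congrArg (fun f => HasSum f _) (funext fun n => ?_)) h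
      symm
      rw [hrp, hrp, ← Real.rpow_natCast x, ← Real.rpow_add h0]
      congr 1; push_cast; ring
  rw [hT.tsum_eq, ← key, mul_comm S, mul_div_mul_right _ _ (by linarith : S ≠ 0)]
end

section
/- For every integer N ≥ 1 and every real q with 0 < q < 1, the A_{N−1} lattice theta function at the shifted Weyl vector has the product form: ∑ over vectors k ∈ ℤ^N with k_1 + … + k_N = 0 of q^((1/2)·∑_{i=1}^N (k_i + (N+1−2i)/(2N))²) equals q^((N²−1)/(24N)) · ∏_{k=1}^∞ (1 − q^k)^N / ∏_{k=1}^∞ (1 − q^(k/N)). -/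
namespace ThetaProd
open Filter Topology Finset

/-- finite q-Pochhammer -/
noncomputable def P (q : ℝ) (n : ℕ) : ℝ := ∏ j ∈ range n, (1 - q ^ (j + 1))

noncomputable def G (q : ℝ) : ℕ → ℕ → ℝ
  | _, 0 => 1
  | 0, _ + 1 => 0
  | n + 1, k + 1 => G q n (k + 1) + q ^ (n - k) * G q n k

lemma G_zero (q : ℝ) (n : ℕ) : G q n 0 = 1 := by cases n <;> simp [G]

lemma G_lt (q : ℝ) (n k : ℕ) (h : n < k) : G q n k = 0 := by
  induction n generalizing k with
  | zero => obtain ⟨k, rfl⟩ : ∃ j, k = j + 1 := ⟨k - 1, by omega⟩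
            simp [G]
  | succ n ih =>
    obtain ⟨k, rfl⟩ : ∃ j, k = j + 1 := ⟨k - 1, by omega⟩
    simp [G, ih (k + 1) (by omega), ih k (by omega)]

lemma P_succ (q : ℝ) (n : ℕ) : P q (n + 1) = P q n * (1 - q ^ (n + 1)) := by
  simp [P, prod_range_succ]

lemma G_self (q : ℝ) (n : ℕ) : G q n n = 1 := by
  induction n with
  | zero => simp [G]
  | succ n ih => simp [G, ih, G_lt q n (n + 1) (by omega)]

lemma G_closed (q : ℝ) (n : ℕ) : ∀ a b : ℕ, a + b = n → G q n a * (P q a * P q b) = P q n := by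
  induction n with
  | zero => intro a b h
            obtain ⟨rfl, rfl⟩ : a = 0 ∧ b = 0 := by omega
            simp [G, P]
  | succ n ih =>
    intro a b h
    rcases a with _ | a
    · obtain rfl : b = n + 1 := by omega
      simp [G, P]
    rcases b with _ | b
    · obtain rfl : a = n := by omega
      simp [G_self, P]
    have h1 := ih (a + 1) b (by omega)
    have h2 := ih a (b + 1) (by omega)
    have e : n - a = b + 1 := by omega
    have e2 : n + 1 = (a + 1) + (b + 1) := by omega
    simp only [G]
    rw [e, P_succ q n]
    rw [P_succ] at h1 h2 ⊢
    rw [P_succ q b]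
    rw [show q ^ (n + 1) = q ^ (a + 1) * q ^ (b + 1) by rw [e2, pow_add]]
    linear_combination (1 - q ^ (b + 1)) * h1 + (1 - q ^ (a + 1)) * q ^ (b + 1) * h2

lemma qbinom (q x : ℝ) (n : ℕ) :
    ∏ j ∈ range n, (1 + x * q ^ j) = ∑ k ∈ range (n + 1), G q n k * q ^ (k.choose 2) * x ^ k := by
  induction n with
  | zero => simp [G]
  | succ n ih =>
    rw [prod_range_succ, ih, sum_range_succ' _ (n + 1)]
    have key : ∀ k ∈ range (n + 1), G q (n + 1) (k + 1) * q ^ ((k + 1).choose 2) * x ^ (k + 1)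
        = G q n (k + 1) * q ^ ((k + 1).choose 2) * x ^ (k + 1)
          + (G q n k * q ^ (k.choose 2) * x ^ k) * (x * q ^ n) := by
      intro k hk
      have hk' : k ≤ n := by simpa [Nat.lt_succ_iff] using hk
      have e : (k + 1).choose 2 = k + k.choose 2 := by simp [Nat.choose_succ_succ']
      obtain ⟨d, rfl⟩ := Nat.exists_eq_add_of_le hk'
      simp only [G, e, Nat.add_sub_cancel_left]
      ring
    rw [sum_congr rfl key, sum_add_distrib, ← sum_mul]
    have h3 := sum_range_succ' (fun k => G q n k * q ^ (k.choose 2) * x ^ k) (n + 1)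
    rw [sum_range_succ, G_lt q n (n + 1) (by omega)] at h3
    simp only [G_zero] at h3 ⊢
    simp only [zero_mul, add_zero] at h3
    linear_combination h3


lemma summable_rpow_lin {q : ℝ} (h0 : 0 < q) (h1 : q < 1) (a : ℝ) : Summable fun n : ℕ => q ^ ((n : ℝ) + a) := by
  have : (fun n : ℕ => q ^ ((n : ℝ) + a)) = fun n : ℕ => q ^ n * q ^ a := by
    ext n; rw [Real.rpow_add h0, Real.rpow_natCast]
  rw [this]
  exact (summable_geometric_of_lt_one h0.le h1).mul_right _

lemma summable_neg_pow {q : ℝ} (h0 : 0 < q) (h1 : q < 1) : Summable fun n : ℕ => -q ^ (n + 1) :=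
  (((summable_geometric_of_lt_one h0.le h1).mul_right q).neg).congr (fun n => by simp [pow_succ])

lemma mult_P {q : ℝ} (h0 : 0 < q) (h1 : q < 1) : Multipliable fun n : ℕ => 1 - q ^ (n + 1) := by
  simpa [sub_eq_add_neg] using Real.multipliable_one_add_of_summable (summable_neg_pow h0 h1)

lemma P_factor_pos {q : ℝ} (h0 : 0 < q) (h1 : q < 1) (n : ℕ) : 0 < 1 - q ^ (n + 1) := by
  have := pow_lt_one₀ h0.le h1 (Nat.succ_ne_zero n)
  simpa using this

lemma P_pos {q : ℝ} (h0 : 0 < q) (h1 : q < 1) (n : ℕ) : 0 < P q n := prod_pos fun i _ => P_factor_pos h0 h1 i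

lemma P_le_one {q : ℝ} (h0 : 0 < q) (h1 : q < 1) (n : ℕ) : P q n ≤ 1 :=
  prod_le_one (fun i _ => (P_factor_pos h0 h1 i).le) fun i _ => by
    have : 0 < q ^ (i + 1) := by positivity
    linarith

lemma Pinf_pos {q : ℝ} (h0 : 0 < q) (h1 : q < 1) : 0 < ∏' n : ℕ, (1 - q ^ (n + 1)) := by
  have := Real.rexp_tsum_eq_tprod (f := fun n : ℕ => 1 - q ^ (n + 1)) (P_factor_pos h0 h1)
    (by simpa [sub_eq_add_neg] using
      Real.summable_log_one_add_of_summable (summable_neg_pow h0 h1))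
  rw [← this]; positivity

lemma P_tendsto {q : ℝ} (h0 : 0 < q) (h1 : q < 1) : Tendsto (P q) atTop (𝓝 (∏' n : ℕ, (1 - q ^ (n + 1)))) :=
  (mult_P h0 h1).hasProd.tendsto_prod_nat

lemma Pinf_le {q : ℝ} (h0 : 0 < q) (h1 : q < 1) (n : ℕ) : ∏' n : ℕ, (1 - q ^ (n + 1)) ≤ P q n := by
  refine Antitone.le_of_tendsto (antitone_nat_of_succ_le fun n => ?_) (P_tendsto h0 h1) n
  rw [P_succ]
  have : 0 < q ^ (n + 1) := by positivity
  have := P_pos h0 h1 n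
  nlinarith

lemma summable_theta {q : ℝ} (h0 : 0 < q) (h1 : q < 1) (a : ℝ) : Summable fun m : ℤ => q ^ ((m : ℝ) ^ 2 / 2 + a * m) := by
  have hl : Real.log q < 0 := Real.log_neg h0 h1
  have h := ((summable_jacobiTheta₂_term_iff (⟨0, -(a * Real.log q) / (2 * Real.pi)⟩ : ℂ)
    (⟨0, -Real.log q / (2 * Real.pi)⟩ : ℂ)).mpr (by
      have := Real.pi_pos
      simp only
      apply div_pos <;> linarith)).norm
  refine h.congr fun m => ?_
  rw [norm_jacobiTheta₂_term, Real.rpow_def_of_pos h0]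
  congr 1
  have := Real.pi_ne_zero
  simp only
  field_simp
  ring

/-- finite JTP coefficient -/
noncomputable def c (q : ℝ) (M : ℕ) (m : ℤ) : ℝ :=
  if -(M : ℤ) ≤ m then G q (2 * M) (M + m).toNat else 0

lemma c_zero {q : ℝ} (M : ℕ) (m : ℤ) (h : m ∉ Finset.Icc (-(M : ℤ)) M) : c q M m = 0 := by
  unfold c
  split_ifs with h2
  · apply G_lt
    simp only [Finset.mem_Icc, not_and, not_le] at h
    have := h h2
    omega
  · rfl

lemma c_eq {q : ℝ} (h0 : 0 < q) (h1 : q < 1) (M : ℕ) (m : ℤ) (h : m ∈ Finset.Icc (-(M : ℤ)) M) :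
    c q M m = P q (2 * M) / (P q (M + m).toNat * P q (M - m).toNat) := by
  simp only [Finset.mem_Icc] at h
  rw [c, if_pos h.1, eq_div_iff (mul_pos (P_pos h0 h1 _) (P_pos h0 h1 _)).ne']
  apply G_closed
  omega

lemma c_bound {q : ℝ} (h0 : 0 < q) (h1 : q < 1) (M : ℕ) (m : ℤ) :
    |c q M m| ≤ 1 / ((∏' n : ℕ, (1 - q ^ (n + 1))) * ∏' n : ℕ, (1 - q ^ (n + 1))) := by
  have hp := Pinf_pos h0 h1
  by_cases h : m ∈ Finset.Icc (-(M : ℤ)) M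
  · rw [c_eq h0 h1 M m h, abs_of_nonneg (div_nonneg (P_pos h0 h1 _).le
      (mul_pos (P_pos h0 h1 _) (P_pos h0 h1 _)).le)]
    apply div_le_div₀ zero_le_one (P_le_one h0 h1 _) (by positivity)
    exact mul_le_mul (Pinf_le h0 h1 _) (Pinf_le h0 h1 _) hp.le (P_pos h0 h1 _).le
  · rw [c_zero M m h, abs_zero]; positivity

lemma c_tendsto {q : ℝ} (h0 : 0 < q) (h1 : q < 1) (m : ℤ) :
    Tendsto (fun M => c q M m) atTop (𝓝 (1 / (∏' n : ℕ, (1 - q ^ (n + 1))))) := by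
  have hp := Pinf_pos h0 h1
  have t := P_tendsto h0 h1
  have e1 : Tendsto (fun M : ℕ => 2 * M) atTop atTop :=
    tendsto_atTop_mono (fun n => by simp only [id]; omega) tendsto_id
  have e2 : Tendsto (fun M : ℕ => ((M : ℤ) + m).toNat) atTop atTop :=
    tendsto_atTop_atTop.2 fun b => ⟨b + m.natAbs, fun a ha => by omega⟩
  have e3 : Tendsto (fun M : ℕ => ((M : ℤ) - m).toNat) atTop atTop :=
    tendsto_atTop_atTop.2 fun b => ⟨b + m.natAbs, fun a ha => by omega⟩
  have := (t.comp e1).div ((t.comp e2).mul (t.comp e3)) (mul_pos hp hp).ne'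
  rw [div_mul_cancel_left₀ hp.ne', ← one_div] at this
  refine this.congr' ?_
  filter_upwards [eventually_ge_atTop m.natAbs] with M hM
  rw [c_eq h0 h1 M m (by simp only [Finset.mem_Icc]; omega)]
  rfl

lemma finite_jtp {q : ℝ} (h0 : 0 < q) (a : ℝ) (M : ℕ) :
    (∏ n ∈ range M, (1 + q ^ ((n : ℝ) + (1 / 2 + a)))) *
      (∏ n ∈ range M, (1 + q ^ ((n : ℝ) + (1 / 2 - a)))) =
    ∑' m : ℤ, c q M m * q ^ ((m : ℝ) ^ 2 / 2 + a * m) := by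
  rw [tsum_eq_sum (s := Finset.Icc (-(M : ℤ)) M) (fun m hm => by rw [c_zero M m hm, zero_mul])]
  have hb := qbinom q (q ^ (a + 1 / 2 - M)) (2 * M)
  rw [two_mul, prod_range_add, ← two_mul] at hb
  have hA : ∏ j ∈ range M, (1 + q ^ (a + 1 / 2 - M) * q ^ (M + j)) =
      ∏ n ∈ range M, (1 + q ^ ((n : ℝ) + (1 / 2 + a))) := by
    refine prod_congr rfl fun j _ => ?_
    rw [← Real.rpow_natCast, ← Real.rpow_add h0]
    congr 2; push_cast; ring
  have hQ : ∀ L : ℕ, ∏ n ∈ range L, q ^ (a - 1 / 2 - n) = q ^ (a * L - (L : ℝ) ^ 2 / 2) := by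
    intro L
    induction L with
    | zero => simp
    | succ L ih =>
      rw [prod_range_succ, ih, ← Real.rpow_add h0]; congr 1; push_cast; ring
  have hB : ∏ j ∈ range M, (1 + q ^ (a + 1 / 2 - M) * q ^ j) =
      q ^ (a * M - (M : ℝ) ^ 2 / 2) * ∏ n ∈ range M, (1 + q ^ ((n : ℝ) + (1 / 2 - a))) := by
    rw [← hQ, ← prod_mul_distrib, ← prod_range_reflect]
    refine prod_congr rfl fun j hj => ?_
    have hj' : j + 1 ≤ M := by simpa using hj
    rw [← Real.rpow_natCast, ← Real.rpow_add h0, mul_add, ← Real.rpow_add h0, mul_one, add_comm]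
    congr 1
    · congr 1; rw [Nat.sub_sub, Nat.cast_sub (by omega)]; push_cast; ring
    · rw [← Real.rpow_zero q]; congr 1; ring
  have hS : ∑ k ∈ range (2 * M + 1), G q (2 * M) k * q ^ (k.choose 2) * (q ^ (a + 1 / 2 - M)) ^ k =
      q ^ (a * M - (M : ℝ) ^ 2 / 2) *
        ∑ m ∈ Finset.Icc (-(M : ℤ)) M, c q M m * q ^ ((m : ℝ) ^ 2 / 2 + a * m) := by
    rw [mul_sum]
    refine sum_bij' (fun k _ => (k : ℤ) - M) (fun m _ => (M + m).toNat) ?_ ?_ ?_ ?_ ?_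
    · intro k hk; simp only [Finset.mem_range, Finset.mem_Icc] at *; omega
    · intro k hk; simp only [Finset.mem_range, Finset.mem_Icc] at *; omega
    · intro k hk; simp only [Finset.mem_range] at *; omega
    · intro k hk; simp only [Finset.mem_Icc] at *; omega
    · intro k hk
      rw [c, if_pos (by omega), show ((M : ℤ) + ((k : ℤ) - M)).toNat = k by omega, mul_left_comm,
        ← Real.rpow_add h0, mul_assoc, ← Real.rpow_natCast, ← Real.rpow_natCast, ← Real.rpow_mul h0.le,
        ← Real.rpow_add h0, Nat.cast_choose_two]
      congr 2
      push_cast; ring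
  rw [hA, hB, hS] at hb
  have hne : q ^ (a * M - (M : ℝ) ^ 2 / 2) ≠ 0 := (Real.rpow_pos_of_pos h0 _).ne'
  apply mul_left_cancel₀ hne
  linear_combination hb

lemma mult_theta {q : ℝ} (h0 : 0 < q) (h1 : q < 1) (a : ℝ) : Multipliable fun n : ℕ => 1 + q ^ ((n : ℝ) + a) :=
  Real.multipliable_one_add_of_summable (summable_rpow_lin h0 h1 a)

theorem jtp {q : ℝ} (h0 : 0 < q) (h1 : q < 1) (a : ℝ) :
    ∑' m : ℤ, q ^ ((m : ℝ) ^ 2 / 2 + a * m) = (∏' n : ℕ, (1 - q ^ (n + 1))) *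
      ((∏' n : ℕ, (1 + q ^ ((n : ℝ) + (1 / 2 + a)))) *
      (∏' n : ℕ, (1 + q ^ ((n : ℝ) + (1 / 2 - a))))) := by
  have hp := Pinf_pos h0 h1
  have t1 := (mult_theta h0 h1 (1 / 2 + a)).hasProd.tendsto_prod_nat.mul
    (mult_theta h0 h1 (1 / 2 - a)).hasProd.tendsto_prod_nat
  simp only [finite_jtp h0] at t1
  have t2 := tendsto_tsum_of_dominated_convergence (𝓕 := atTop)
    (f := fun M (m : ℤ) => c q M m * q ^ ((m : ℝ) ^ 2 / 2 + a * m))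
    ((summable_theta h0 h1 a).mul_left
      (1 / ((∏' n : ℕ, (1 - q ^ (n + 1))) * ∏' n : ℕ, (1 - q ^ (n + 1)))))
    (fun m => (c_tendsto h0 h1 m).mul_const _)
    (Eventually.of_forall fun M m => by
      rw [norm_mul, Real.norm_eq_abs, Real.norm_of_nonneg (Real.rpow_pos_of_pos h0 _).le]
      exact mul_le_mul_of_nonneg_right (c_bound h0 h1 M m) (Real.rpow_pos_of_pos h0 _).le)
  have := tendsto_nhds_unique t1 t2
  rw [tsum_mul_left] at this
  rw [this]
  field_simp

/-- splitting of products by residues -/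
lemma split_prod (N : ℕ) (hN : 1 ≤ N) (f : ℕ → ℝ) (F : ℝ) (hf : HasProd f F)
    (g : Fin N → ℝ) (hg : ∀ i : Fin N, HasProd (fun n : ℕ => f (N * n + i)) (g i)) :
    ∏ i, g i = F := by
  have t1 := tendsto_finsetProd (Finset.univ) fun i _ => (hg i).tendsto_prod_nat
  have t2 := hf.tendsto_prod_nat.comp (tendsto_id.const_mul_atTop' (show 0 < N by omega))
  refine tendsto_nhds_unique t1 (t2.congr fun M => ?_)
  simp only [Function.comp, id]
  induction M with
  | zero => simp
  | succ M ih =>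
    rw [Nat.mul_succ, prod_range_add, ih]
    simp only [prod_range_succ, prod_mul_distrib]
    rw [← Fin.prod_univ_eq_prod_range (fun x => f (N * M + x))]


lemma mul_aux {α β : Type*} (f : α → ℝ) (g : β → ℝ) (hf : Summable f) (hg : Summable g) :
    Summable (fun p : α × β => f p.1 * g p.2) ∧
      (∑' x, f x) * ∑' y, g y = ∑' p : α × β, f p.1 * g p.2 :=
  ⟨summable_mul_of_summable_norm hf.norm hg.norm, tsum_mul_tsum_of_summable_norm hf.norm hg.norm⟩

/-- nondependent cons equivalence -/
def cE (N : ℕ) : ℤ × (Fin N → ℤ) ≃ (Fin (N + 1) → ℤ) := Fin.consEquiv fun _ => ℤ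

lemma pi_tsum (N : ℕ) (f : Fin N → ℤ → ℝ) (hf0 : ∀ i m, 0 ≤ f i m) (hf : ∀ i, Summable (f i)) :
    Summable (fun k : Fin N → ℤ => ∏ i, f i (k i)) ∧
      ∑' k : Fin N → ℤ, ∏ i, f i (k i) = ∏ i, ∑' m, f i m := by
  induction N with
  | zero => exact ⟨Summable.of_finite, by simp⟩
  | succ N ih =>
    obtain ⟨s, t⟩ := ih (fun i => f i.succ) (fun i => hf0 i.succ) (fun i => hf i.succ)
    have e : (fun k : Fin (N + 1) → ℤ => ∏ i, f i (k i)) ∘ (cE N) =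
        fun p : ℤ × (Fin N → ℤ) => f 0 p.1 * ∏ i : Fin N, f (Fin.succ i) (p.2 i) := by
      ext p
      simp [Fin.prod_univ_succ, cE, Fin.consEquiv]
    obtain ⟨m1, m2⟩ := mul_aux (f 0) (fun k : Fin N → ℤ => ∏ i : Fin N, f (Fin.succ i) (k i)) (hf 0) s
    rw [← e] at m1
    refine ⟨(cE N).summable_iff.1 m1, ?_⟩
    rw [Fin.prod_univ_succ, ← t, m2, ← e]
    exact ((cE N).tsum_eq (fun k : Fin (N + 1) → ℤ => ∏ i, f i (k i))).symm

/-- cyclic shift of lattice vectors raising the coordinate sum by one -/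
def shift (n : ℕ) : (Fin (n + 1) → ℤ) ≃ (Fin (n + 1) → ℤ) where
  toFun k := Fin.snoc (α := fun _ => ℤ) (Fin.tail k) (k 0 + 1)
  invFun k := Fin.cons (α := fun _ => ℤ) (k (Fin.last n) - 1) (Fin.init k)
  left_inv k := by simp
  right_inv k := by simp

lemma shift_sum (n : ℕ) (k : Fin (n + 1) → ℤ) : ∑ i, shift n k i = ∑ i, k i + 1 := by
  rw [Fin.sum_univ_castSucc, Fin.sum_univ_succ k]
  simp [shift, Fin.tail]
  ring

/-- the linear coefficients -/
noncomputable def al (N : ℕ) (i : ℕ) : ℝ := ((N : ℝ) - 1 - 2 * (i : ℝ)) / (2 * N)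

/-- quadratic form -/
noncomputable def En (N : ℕ) (k : Fin N → ℤ) : ℝ := ∑ i, ((k i : ℝ) ^ 2 / 2 + al N i * k i)

lemma En_shift (n : ℕ) (k : Fin (n + 1) → ℤ) :
    En (n + 1) (shift n k) =
      (((∑ i, k i : ℤ) : ℝ) + 1 / 2) / ((n + 1 : ℕ) : ℝ) + En (n + 1) k := by
  have hn : ((n : ℝ) + 1) ≠ 0 := by positivity
  unfold En
  rw [Fin.sum_univ_castSucc, Fin.sum_univ_succ k, Fin.sum_univ_succ (fun i => ((k i : ℝ) ^ 2 / 2 + al (n + 1) i * k i))]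
  have h : ∀ i : Fin n, ((shift n k i.castSucc : ℝ) ^ 2 / 2 + al (n + 1) i.castSucc * shift n k i.castSucc)
      = ((k i.succ : ℝ) ^ 2 / 2 + al (n + 1) i.succ * k i.succ) + (1 / ((n : ℝ) + 1)) * k i.succ := by
    intro i
    simp only [shift, Equiv.coe_fn_mk, Fin.snoc_castSucc, Fin.tail, al, Fin.val_castSucc, Fin.val_succ]
    push_cast
    field_simp
    ring
  rw [sum_congr rfl fun i _ => h i, sum_add_distrib, ← mul_sum]
  generalize ∑ i : Fin n, ((k i.succ : ℝ) ^ 2 / 2 + al (n + 1) i.succ * k i.succ) = X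
  simp only [shift, Equiv.coe_fn_mk, Fin.snoc_last, al, Fin.val_last, Fin.val_zero]
  push_cast
  field_simp
  ring

/-- fiber sums -/
noncomputable def S (q : ℝ) (N : ℕ) (m : ℤ) : ℝ :=
  ∑' k : {k : Fin N → ℤ // ∑ i, k i = m}, q ^ En N k.1

lemma S_succ {q : ℝ} (h0 : 0 < q) (n : ℕ) (m : ℤ) :
    S q (n + 1) (m + 1) = q ^ (((m : ℝ) + 1 / 2) / ((n + 1 : ℕ) : ℝ)) * S q (n + 1) m := by
  unfold S
  rw [← tsum_mul_left, ← ((shift n).subtypeEquiv (p := fun k => ∑ i, k i = m)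
    (q := fun k => ∑ i, k i = m + 1) (fun k => by rw [shift_sum]; omega)).tsum_eq]
  refine tsum_congr fun k => ?_
  rw [Equiv.subtypeEquiv_apply, En_shift, k.2, Real.rpow_add h0]

lemma S_eq {q : ℝ} (h0 : 0 < q) (n : ℕ) (m : ℤ) :
    S q (n + 1) m = q ^ ((m : ℝ) ^ 2 / 2 / ((n + 1 : ℕ) : ℝ)) * S q (n + 1) 0 := by
  have hn : (((n + 1 : ℕ) : ℝ)) ≠ 0 := by positivity
  induction m with
  | zero => simp
  | succ m ih =>
    rw [S_succ h0, ih, ← mul_assoc, ← Real.rpow_add h0]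
    congr 2; push_cast; field_simp; ring
  | pred m ih =>
    have := S_succ h0 n (-(m : ℤ) - 1)
    rw [sub_add_cancel, ih] at this
    have hne := (Real.rpow_pos_of_pos h0 (((((-(m : ℤ) - 1 : ℤ)) : ℝ) + 1 / 2) / ((n + 1 : ℕ) : ℝ))).ne'
    apply mul_left_cancel₀ hne
    rw [← this, ← mul_assoc, ← Real.rpow_add h0]
    congr 2; push_cast; field_simp; ring

lemma total {q : ℝ} (h0 : 0 < q) (h1 : q < 1) (n : ℕ) :
    (∑' m : ℤ, q ^ ((m : ℝ) ^ 2 / 2 / ((n + 1 : ℕ) : ℝ))) * S q (n + 1) 0 =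
      ∏ i : Fin (n + 1), ∑' m : ℤ, q ^ ((m : ℝ) ^ 2 / 2 + al (n + 1) i * m) := by
  obtain ⟨s, t⟩ := pi_tsum (n + 1) (fun i m => q ^ ((m : ℝ) ^ 2 / 2 + al (n + 1) i * m))
    (fun i m => (Real.rpow_pos_of_pos h0 _).le) (fun i => summable_theta h0 h1 _)
  have e : ∀ k : Fin (n + 1) → ℤ, ∏ i, q ^ ((k i : ℝ) ^ 2 / 2 + al (n + 1) i * k i) =
      q ^ En (n + 1) k := fun k => (Real.rpow_sum_of_pos h0 _ _).symm
  simp only [e] at s t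
  rw [← t, ← tsum_mul_right, ← (Equiv.sigmaFiberEquiv fun k : Fin (n + 1) → ℤ => ∑ i, k i).tsum_eq]
  have s' := (Equiv.sigmaFiberEquiv fun k : Fin (n + 1) → ℤ => ∑ i, k i).summable_iff.2 s
  have := s'.tsum_sigma
  simp only [Function.comp] at this
  rw [this]
  refine tsum_congr fun m => ?_
  rw [← S_eq h0]
  rfl

lemma prod_split_theta {q : ℝ} (h0 : 0 < q) (h1 : q < 1) (n : ℕ) :
    ∏ i : Fin (n + 1), ∏' j : ℕ, (1 + q ^ ((j : ℝ) + (1 / 2 - al (n + 1) i))) =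
      ∏' j : ℕ, (1 + (q ^ (1 / ((n + 1 : ℕ) : ℝ))) ^ ((j : ℝ) + 1 / 2)) := by
  have hn : ((n : ℝ) + 1) ≠ 0 := by positivity
  have t0 : 0 < q ^ (1 / ((n + 1 : ℕ) : ℝ)) := Real.rpow_pos_of_pos h0 _
  have t1 : q ^ (1 / ((n + 1 : ℕ) : ℝ)) < 1 := Real.rpow_lt_one h0.le h1 (by positivity)
  refine split_prod (n + 1) (by omega) _ _ (mult_theta t0 t1 (1 / 2)).hasProd _ fun i => ?_
  convert (mult_theta h0 h1 (1 / 2 - al (n + 1) i)).hasProd using 1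
  ext j
  rw [← Real.rpow_mul h0.le]
  congr 2
  simp only [al]; push_cast; field_simp; ring

lemma prod_split_theta' {q : ℝ} (h0 : 0 < q) (h1 : q < 1) (n : ℕ) :
    ∏ i : Fin (n + 1), ∏' j : ℕ, (1 + q ^ ((j : ℝ) + (1 / 2 + al (n + 1) i))) =
      ∏' j : ℕ, (1 + (q ^ (1 / ((n + 1 : ℕ) : ℝ))) ^ ((j : ℝ) + 1 / 2)) := by
  rw [← prod_split_theta h0 h1, ← Equiv.prod_comp Fin.revPerm]
  refine prod_congr rfl fun i _ => ?_
  have : al (n + 1) ((Fin.revPerm i : Fin (n + 1)) : ℕ) = - al (n + 1) i := by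
    have hi : (i : ℕ) ≤ n := by omega
    simp only [al, Fin.revPerm_apply, Fin.val_rev]
    rw [show n + 1 - ((i : ℕ) + 1) = n - i by omega, Nat.cast_sub hi]
    push_cast; ring
  rw [this, ← sub_eq_add_neg]

lemma tp_pos {q : ℝ} (h0 : 0 < q) (h1 : q < 1) (a : ℝ) : 0 < ∏' j : ℕ, (1 + q ^ ((j : ℝ) + a)) := by
  rw [← Real.rexp_tsum_eq_tprod (f := fun j : ℕ => 1 + q ^ ((j : ℝ) + a))
    (fun j => by positivity)
    (Real.summable_log_one_add_of_summable (summable_rpow_lin h0 h1 a))]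
  positivity

lemma S_zero {q : ℝ} (h0 : 0 < q) (h1 : q < 1) (n : ℕ) : S q (n + 1) 0 =
    (∏' k : ℕ, (1 - q ^ (k + 1))) ^ (n + 1) /
      ∏' k : ℕ, (1 - (q ^ (1 / ((n + 1 : ℕ) : ℝ))) ^ (k + 1)) := by
  have h := total h0 h1 n
  simp only [jtp h0 h1, prod_mul_distrib, prod_split_theta h0 h1, prod_split_theta' h0 h1] at h
  have t0 : 0 < q ^ (1 / ((n + 1 : ℕ) : ℝ)) := Real.rpow_pos_of_pos h0 _
  have t1 : q ^ (1 / ((n + 1 : ℕ) : ℝ)) < 1 := Real.rpow_lt_one h0.le h1 (by positivity)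
  have h2 := jtp t0 t1 0
  simp only [add_zero, sub_zero, zero_mul] at h2
  have e : ∀ m : ℤ, q ^ ((m : ℝ) ^ 2 / 2 / ((n + 1 : ℕ) : ℝ)) =
      (q ^ (1 / ((n + 1 : ℕ) : ℝ))) ^ ((m : ℝ) ^ 2 / 2) := fun m => by
    rw [← Real.rpow_mul h0.le]; congr 1; ring
  simp only [e] at h
  rw [h2] at h
  have p1 := tp_pos t0 t1 (1 / 2)
  have p2 := Pinf_pos t0 t1
  rw [eq_div_iff p2.ne']
  simp only [prod_const, card_univ, Fintype.card_fin] at h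
  apply mul_right_cancel₀ (mul_pos p1 p1).ne'
  linear_combination h

lemma sum_al_sq (n : ℕ) : ∑ i : Fin (n + 1), (al (n + 1) i) ^ 2 / 2 =
    (((n + 1 : ℕ) : ℝ) ^ 2 - 1) / (24 * ((n + 1 : ℕ) : ℝ)) := by
  have key : ∀ (c : ℝ) (L : ℕ), ∑ i ∈ range L, (c - 2 * (i : ℝ)) ^ 2 =
      L * c ^ 2 - 2 * c * (L * (L - 1)) + 2 * L * (L - 1) * (2 * L - 1) / 3 := by
    intro c L
    induction L with
    | zero => simp
    | succ L ih => rw [sum_range_succ, ih]; push_cast; ring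
  have hn : ((n : ℝ) + 1) ≠ 0 := by positivity
  rw [Fin.sum_univ_eq_sum_range (fun i => (al (n + 1) i) ^ 2 / 2)]
  have : ∀ i ∈ range (n + 1), (al (n + 1) i) ^ 2 / 2 =
      ((n : ℝ) - 2 * (i : ℝ)) ^ 2 * (1 / (8 * ((n : ℝ) + 1) ^ 2)) := by
    intro i _
    simp only [al]; push_cast; field_simp; ring
  rw [sum_congr rfl this, ← sum_mul, key]
  push_cast; field_simp; ring

end ThetaProd

/-- Product formula for the `A_{N−1}` lattice theta function at the shifted
    Weyl vector `ρ̂^(N)` with components `(N+1−2i)/(2N)`, `i = 1,…,N`. -/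
theorem stmt1 (N : ℕ) (hN : 1 ≤ N) (q : ℝ) (hq0 : 0 < q) (hq1 : q < 1) :
    (∑' k : {k : Fin N → ℤ // ∑ i, k i = 0},
        q ^ ((1 / 2 : ℝ) *
          ∑ i : Fin N, ((k.1 i : ℝ) + ((N : ℝ) - 1 - 2 * (i.val : ℝ)) / (2 * N)) ^ 2)) =
      q ^ (((N : ℝ) ^ 2 - 1) / (24 * N)) *
        (∏' k : ℕ, (1 - q ^ (k + 1)) ^ N) / ∏' k : ℕ, (1 - q ^ (((k : ℝ) + 1) / N)) := by
  obtain ⟨n, rfl⟩ : ∃ n, N = n + 1 := ⟨N - 1, by omega⟩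
  have h := ThetaProd.S_zero hq0 hq1 n
  have e : ∀ k : ℕ, (q ^ (1 / ((n + 1 : ℕ) : ℝ))) ^ (k + 1) =
      q ^ (((k : ℝ) + 1) / ((n + 1 : ℕ) : ℝ)) := fun k => by
    rw [← Real.rpow_natCast, ← Real.rpow_mul hq0.le]; congr 1; push_cast; ring
  simp only [e] at h
  rw [(ThetaProd.mult_P hq0 hq1).tprod_pow, mul_div_assoc, ← h, ThetaProd.S, ← tsum_mul_left]
  refine tsum_congr fun k => ?_
  rw [← Real.rpow_add hq0, ← ThetaProd.sum_al_sq, ThetaProd.En, ← Finset.sum_add_distrib,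
    Finset.mul_sum]
  congr 1
  refine Finset.sum_congr rfl fun i _ => ?_
  simp only [ThetaProd.al]
  ring
end

section
/- Let K ≥ 1, let l_1,…,l_K be positive integers with l_1 + … + l_K = N, let r_1,…,r_K be real numbers, and let S ⊆ ℤ. Let v ∈ ℝ^N be the concatenation of the K blocks (r_j + (l_j − 1 − 2m)/(2l_j))_{m=0,…,l_j−1}. Then for every real q with 0 < q < 1: ∑ over k ∈ ℤ^N with k_1+…+k_N ∈ S of q^((1/2)·∑_{i=1}^N (v_i+k_i)²) equals [∏_{j=1}^K ( ∑ over m ∈ ℤ^{l_j} with m_1+…+m_{l_j}=0 of q^((1/2)·∑_{i=1}^{l_j} (m_i + (l_j+1−2i)/(2l_j))²) )] · [∑ over n ∈ ℤ^K with n_1+…+n_K ∈ S of q^(∑_{j=1}^K (n_j + l_j r_j)²/(2 l_j))]. -/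
open scoped BigOperators

lemma aux_shift (l : ℕ) (hl : 0 < l) (n : ℤ) :
    ∃ (σ : Equiv.Perm (Fin l)) (c : Fin l → ℤ),
      (∀ i, ((i.val : ℕ) : ℤ) + n = l * c i + ((σ i).val : ℕ)) ∧ ∑ i, c i = n := by
  have hl' : (0 : ℤ) < l := by exact_mod_cast hl
  have hnn : ∀ i : Fin l, 0 ≤ ((i.val : ℤ) + n) % l := fun i => Int.emod_nonneg _ hl'.ne'
  have hlt : ∀ i : Fin l, ((i.val : ℤ) + n) % l < l := fun i => Int.emod_lt_of_pos _ hl'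
  let f : Fin l → Fin l := fun i => ⟨(((i.val : ℤ) + n) % l).toNat, by
    have := hnn i; have := hlt i; omega⟩
  have hf : ∀ i, ((f i).val : ℤ) = ((i.val : ℤ) + n) % l := fun i => Int.toNat_of_nonneg (hnn i)
  have hinj : Function.Injective f := by
    intro a b h
    have h1 : ((a.val : ℤ) + n) % l = ((b.val : ℤ) + n) % l := by rw [← hf, ← hf, h]
    have h2 : ((a.val : ℤ)) % l = ((b.val : ℤ)) % l := by
      have h3 : ((a.val : ℤ) + n) ≡ ((b.val : ℤ) + n) [ZMOD l] := h1
      exact Int.ModEq.add_right_cancel' n h3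
    rw [Int.emod_eq_of_lt (by positivity) (by exact_mod_cast a.2),
      Int.emod_eq_of_lt (by positivity) (by exact_mod_cast b.2)] at h2
    exact Fin.ext (by exact_mod_cast h2)
  let σ : Equiv.Perm (Fin l) := Equiv.ofBijective f (Finite.injective_iff_bijective.mp hinj)
  have hσ : ∀ i, σ i = f i := fun i => rfl
  have key : ∀ i : Fin l, ((i.val : ℕ) : ℤ) + n = l * (((i.val : ℤ) + n) / l) + ((σ i).val : ℕ) := by
    intro i
    rw [hσ, hf, Int.mul_ediv_add_emod]
  refine ⟨σ, fun i => ((i.val : ℤ) + n) / l, key, ?_⟩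
  have hs := Finset.sum_congr rfl (fun i (_ : i ∈ Finset.univ) => key i)
  rw [Finset.sum_add_distrib, Finset.sum_add_distrib, ← Finset.mul_sum,
    Equiv.sum_comp σ (fun i => ((i.val : ℕ) : ℤ))] at hs
  simp only [Finset.sum_const, Finset.card_univ, Fintype.card_fin, nsmul_eq_mul] at hs
  have : (l : ℤ) * ∑ i : Fin l, ((i.val : ℤ) + n) / l = l * n := by linarith
  exact mul_left_cancel₀ hl'.ne' this

lemma aux_rho (l : ℕ) (hl : 0 < l) :
    ∑ i : Fin l, ((l : ℝ) - 1 - 2 * (i.val : ℝ)) / (2 * l) = 0 := by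
  rw [← Finset.sum_div, Finset.sum_sub_distrib, ← Finset.mul_sum,
    Fin.sum_univ_eq_sum_range (fun i => (i : ℝ)) l]
  have h : (∑ i ∈ Finset.range l, (i : ℝ)) * 2 = l * (l - 1) := by
    have := Finset.sum_range_id_mul_two l
    have h2 : ((∑ i ∈ Finset.range l, i : ℕ) : ℝ) * 2 = l * ((l - 1 : ℕ) : ℝ) := by
      exact_mod_cast this
    rw [Nat.cast_sub hl] at h2
    push_cast at h2
    exact h2
  simp only [Finset.sum_const, Finset.card_univ, Fintype.card_fin, nsmul_eq_mul]
  rw [div_eq_zero_iff]; left; linarith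

lemma aux_block (l : ℕ) (hl : 0 < l) :
    ∃ e : (Fin l → ℤ) ≃ ℤ × {m : Fin l → ℤ // ∑ i, m i = 0},
      ∀ k, (e k).1 = ∑ i, k i ∧ ∀ r : ℝ,
        (1 / 2 : ℝ) * ∑ i : Fin l,
          ((r + ((l : ℝ) - 1 - 2 * (i.val : ℝ)) / (2 * l)) + (k i : ℝ)) ^ 2 =
        (((e k).1 : ℝ) + l * r) ^ 2 / (2 * l) +
        (1 / 2 : ℝ) * ∑ i : Fin l,
          (((e k).2.1 i : ℝ) + ((l : ℝ) - 1 - 2 * (i.val : ℝ)) / (2 * l)) ^ 2 := by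
  choose σ c hc hsum using aux_shift l hl
  refine ⟨{ toFun := fun k => (∑ i, k i, ⟨fun i => k ((σ (∑ i, k i)).symm i) -
              c (∑ i, k i) ((σ (∑ i, k i)).symm i), ?_⟩)
            invFun := fun p => fun i => p.2.1 (σ p.1 i) + c p.1 i
            left_inv := ?_
            right_inv := ?_ }, ?_⟩
  · rw [Equiv.sum_comp (σ (∑ i, k i)).symm (fun i => k i - c (∑ i, k i) i),
      Finset.sum_sub_distrib, hsum, sub_self]
  · intro k
    ext i
    simp
  · rintro ⟨n, m, hm⟩
    have : ∑ i, (m (σ n i) + c n i) = n := by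
      rw [Finset.sum_add_distrib, Equiv.sum_comp (σ n) m, hm, hsum, zero_add]
    refine Prod.ext this (Subtype.ext ?_)
    funext i
    simp [this]
  · intro k
    refine ⟨rfl, fun r => ?_⟩
    have hl0 : (l : ℝ) ≠ 0 := by exact_mod_cast hl.ne'
    simp only [Equiv.coe_fn_mk]
    generalize hn : ∑ i, k i = n
    have hx : ∀ i : Fin l, (((k ((σ n).symm (σ n i)) - c n ((σ n).symm (σ n i)) : ℤ) : ℝ) +
        ((l : ℝ) - 1 - 2 * ((σ n i).val : ℝ)) / (2 * l)) =
        ((l : ℝ) - 1 - 2 * (i.val : ℝ)) / (2 * l) + k i - n / l := by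
      intro i
      have h : ((i.val : ℝ)) + n = l * c n i + ((σ n i).val : ℝ) := by exact_mod_cast hc n i
      have h' : ((σ n i).val : ℝ) = i.val + n - l * c n i := by linarith
      rw [Equiv.symm_apply_apply, h']
      push_cast
      field_simp
      ring
    have hS : ∑ i : Fin l, (((k ((σ n).symm i) - c n ((σ n).symm i) : ℤ) : ℝ) +
        ((l : ℝ) - 1 - 2 * (i.val : ℝ)) / (2 * l)) ^ 2 =
        ∑ i : Fin l, (((l : ℝ) - 1 - 2 * (i.val : ℝ)) / (2 * l) + k i - n / l) ^ 2 := by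
      rw [← Equiv.sum_comp (σ n)]
      exact Finset.sum_congr rfl (fun i _ => by rw [hx i])
    rw [hS]
    have hX : ∑ i : Fin l, (((l : ℝ) - 1 - 2 * (i.val : ℝ)) / (2 * l) + k i) = n := by
      rw [Finset.sum_add_distrib, aux_rho l hl, zero_add]; exact_mod_cast hn
    generalize hxx : (fun i : Fin l => ((l : ℝ) - 1 - 2 * (i.val : ℝ)) / (2 * l) + k i) = x
    have hxi : ∀ i : Fin l, ((l : ℝ) - 1 - 2 * (i.val : ℝ)) / (2 * l) + k i = x i :=
      fun i => congrFun hxx i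
    simp only [add_assoc, hxi] at hX ⊢
    have e1 : ∑ i, (r + x i) ^ 2 = l * r ^ 2 + 2 * r * n + ∑ i, x i ^ 2 := by
      simp only [add_sq, Finset.sum_add_distrib, ← Finset.mul_sum, hX]
      simp
    have e2 : ∑ i, (x i - n / l) ^ 2 = ∑ i, x i ^ 2 - n ^ 2 / l := by
      simp only [sub_sq, Finset.sum_add_distrib, Finset.sum_sub_distrib, ← Finset.mul_sum,
        ← Finset.sum_mul, hX]
      simp
      field_simp
      ring
    rw [e1, e2]
    field_simp
    ring

open scoped ENNReal in
lemma aux_prod {α β : Type*} (f : α × β → ℝ≥0∞) : ∑' p, f p = ∑' a, ∑' b, f (a, b) :=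
  ENNReal.tsum_prod (f := fun a b => f (a, b))

open scoped ENNReal in
lemma aux_pi : ∀ (K : ℕ) (M : Fin K → Type) (f : ∀ j, M j → ℝ≥0∞),
    ∑' m : (∀ j, M j), ∏ j, f j (m j) = ∏ j, ∑' x, f j x := by
  intro K
  induction K with
  | zero => intro M f; simp
  | succ K ih =>
    intro M f
    rw [← (Fin.consEquiv M).tsum_eq, aux_prod, Fin.prod_univ_succ, ← ih]
    simp only [Fin.consEquiv_apply, Fin.prod_univ_succ, Fin.cons_zero, Fin.cons_succ,
      ENNReal.tsum_mul_left, ENNReal.tsum_mul_right]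

lemma aux_toReal {α : Type*} (f : α → ℝ) (hf : ∀ a, 0 ≤ f a) :
    ∑' a, f a = (∑' a, ENNReal.ofReal (f a)).toReal := by
  rw [ENNReal.tsum_toReal_eq (fun a => ENNReal.ofReal_ne_top)]
  exact tsum_congr fun a => (ENNReal.toReal_ofReal (hf a)).symm

/-- Factorization of the lattice theta function `Θ_{L_S}(v;q)` (with
    `L_S = {k ∈ ℤ^N : ∑ k_i ∈ S}` and `v` the concatenation of the blocks
    `(r_j + (l_j − 1 − 2m)/(2l_j))_{m=0,…,l_j−1}`, components indexed by the
    sigma type `(j : Fin K) × Fin (l j)`) into a product of `A_{l_j−1}` theta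
    functions and a zero-mode lattice sum. -/
theorem stmt2 (K : ℕ) (hK : 1 ≤ K) (l : Fin K → ℕ) (hl : ∀ j, 0 < l j)
    (r : Fin K → ℝ) (S : Set ℤ) (q : ℝ) (hq0 : 0 < q) (hq1 : q < 1) :
    (∑' k : {k : ((j : Fin K) × Fin (l j)) → ℤ // (∑ i, k i) ∈ S},
        q ^ ((1 / 2 : ℝ) * ∑ i : (j : Fin K) × Fin (l j),
          ((r i.1 + ((l i.1 : ℝ) - 1 - 2 * (i.2.val : ℝ)) / (2 * l i.1)) + (k.1 i : ℝ)) ^ 2)) =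
      (∏ j : Fin K, ∑' m : {m : Fin (l j) → ℤ // ∑ i, m i = 0},
          q ^ ((1 / 2 : ℝ) * ∑ i : Fin (l j),
            ((m.1 i : ℝ) + ((l j : ℝ) - 1 - 2 * (i.val : ℝ)) / (2 * l j)) ^ 2)) *
        (∑' n : {n : Fin K → ℤ // (∑ j, n j) ∈ S},
          q ^ (∑ j : Fin K, ((n.1 j : ℝ) + (l j : ℝ) * r j) ^ 2 / (2 * l j))) := by
  choose e he1 he2 using fun j => aux_block (l j) (hl j)
  have hee : ∀ (j : Fin K) (p : ℤ × {m : Fin (l j) → ℤ // ∑ i, m i = 0}),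
      e j (fun i => (e j).symm p i) = p := fun j p => (e j).apply_symm_apply p
  let E : {k : ((j : Fin K) × Fin (l j)) → ℤ // (∑ i, k i) ∈ S} ≃
      {n : Fin K → ℤ // (∑ j, n j) ∈ S} × (∀ j, {m : Fin (l j) → ℤ // ∑ i, m i = 0}) :=
    { toFun := fun k => (⟨fun j => (e j (fun i => k.1 ⟨j, i⟩)).1, by
          have := k.2
          rw [Fintype.sum_sigma] at this
          simpa only [he1] using this⟩, fun j => (e j (fun i => k.1 ⟨j, i⟩)).2)
      invFun := fun p => ⟨fun i => (e i.1).symm (p.1.1 i.1, p.2 i.1) i.2, by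
          have := p.1.2
          rw [Fintype.sum_sigma]
          have h2 : ∀ j, ∑ i, (e j).symm (p.1.1 j, p.2 j) i = p.1.1 j := fun j => by
            rw [← he1, Equiv.apply_symm_apply]
          simpa only [h2] using this⟩
      left_inv := by
        intro k
        ext i
        simp
      right_inv := by
        rintro ⟨⟨n, hn⟩, m⟩
        refine Prod.ext (Subtype.ext (funext fun j => ?_)) (funext fun j => ?_)
        · exact congrArg Prod.fst (hee j (n j, m j))
        · exact congrArg Prod.snd (hee j (n j, m j)) }
  have hterm : ∀ k : {k : ((j : Fin K) × Fin (l j)) → ℤ // (∑ i, k i) ∈ S},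
      q ^ ((1 / 2 : ℝ) * ∑ i : (j : Fin K) × Fin (l j),
          ((r i.1 + ((l i.1 : ℝ) - 1 - 2 * (i.2.val : ℝ)) / (2 * l i.1)) + (k.1 i : ℝ)) ^ 2) =
      q ^ (∑ j : Fin K, (((E k).1.1 j : ℝ) + (l j : ℝ) * r j) ^ 2 / (2 * l j)) *
      ∏ j : Fin K, q ^ ((1 / 2 : ℝ) * ∑ i : Fin (l j),
            ((((E k).2 j).1 i : ℝ) + ((l j : ℝ) - 1 - 2 * (i.val : ℝ)) / (2 * l j)) ^ 2) := by
    intro k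
    rw [← Real.rpow_sum_of_pos hq0, ← Real.rpow_add hq0, ← Finset.sum_add_distrib,
      Fintype.sum_sigma, Finset.mul_sum]
    congr 1
    exact Finset.sum_congr rfl fun j _ => he2 j (fun i => k.1 ⟨j, i⟩) (r j)
  have hpos : ∀ x : ℝ, 0 ≤ q ^ x := fun x => Real.rpow_nonneg hq0.le x
  rw [aux_toReal _ (fun k => hpos _), aux_toReal _ (fun n => hpos _),
    Finset.prod_congr rfl (fun j _ => aux_toReal _ (fun m => hpos _)),
    ← ENNReal.toReal_prod, ← ENNReal.toReal_mul, ← aux_pi]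
  congr 1
  simp only [hterm]
  rw [E.tsum_eq (fun p => ENNReal.ofReal
      (q ^ (∑ j : Fin K, ((p.1.1 j : ℝ) + (l j : ℝ) * r j) ^ 2 / (2 * l j)) *
      ∏ j : Fin K, q ^ ((1 / 2 : ℝ) * ∑ i : Fin (l j),
            (((p.2 j).1 i : ℝ) + ((l j : ℝ) - 1 - 2 * (i.val : ℝ)) / (2 * l j)) ^ 2))),
    aux_prod, mul_comm, ← ENNReal.tsum_mul_right]
  refine tsum_congr fun n => ?_
  rw [← ENNReal.tsum_mul_left]
  refine tsum_congr fun m => ?_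
  rw [ENNReal.ofReal_mul (hpos _), ENNReal.ofReal_prod_of_nonneg (fun j _ => hpos _)]
end

section
/- Let K ≥ 1, let l_1,…,l_K be positive integers with l_1 + … + l_K = N, let r_1,…,r_K be real numbers, and let S ⊆ ℤ. Let v ∈ ℝ^N be the concatenation of the K blocks (r_j + (l_j − 1 − 2m)/(2l_j))_{m=0,…,l_j−1}. Then for every real q with 0 < q < 1: ∑ over k ∈ ℤ^N with k_1+…+k_N ∈ S of q^((1/2)·∑_{i=1}^N (v_i+k_i)²) equals [∏_{j=1}^K q^((l_j²−1)/(24 l_j)) · ∏_{k=1}^∞ (1−q^k)^{l_j} / ∏_{k=1}^∞ (1−q^(k/l_j))] · [∑ over n ∈ ℤ^K with n_1+…+n_K ∈ S of q^(∑_{j=1}^K (n_j + l_j r_j)²/(2 l_j))]. -/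
open scoped BigOperators

/-- Gaussian binomial coefficients. -/
noncomputable def gb (Q : ℝ) : ℕ → ℕ → ℝ
  | _, 0 => 1
  | 0, _ + 1 => 0
  | M + 1, j + 1 => gb Q M j + Q ^ (j + 1) * gb Q M (j + 1)

lemma gb_zero (Q : ℝ) (M : ℕ) : gb Q M 0 = 1 := by cases M <;> simp [gb]

lemma gb_succ (Q : ℝ) (M j : ℕ) : gb Q (M+1) (j+1) = gb Q M j + Q ^ (j + 1) * gb Q M (j + 1) := by
  simp [gb]

lemma gb_gt (Q : ℝ) (M : ℕ) : ∀ j, M < j → gb Q M j = 0 := by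
  induction M with
  | zero => intro j hj; obtain ⟨i, rfl⟩ : ∃ i, j = i + 1 := ⟨j - 1, by omega⟩; simp [gb]
  | succ M ih =>
    intro j hj; obtain ⟨i, rfl⟩ : ∃ i, j = i + 1 := ⟨j - 1, by omega⟩
    simp [gb, ih i (by omega), ih (i+1) (by omega)]

lemma gb_nonneg (Q : ℝ) (hQ : 0 ≤ Q) (M : ℕ) : ∀ j, 0 ≤ gb Q M j := by
  induction M with
  | zero => intro j; cases j <;> simp [gb]
  | succ M ih =>
    intro j
    cases j with
    | zero => simp [gb]
    | succ j => simp only [gb]; have := ih j; have := ih (j+1); positivity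

/-- finite q-Pochhammer -/
noncomputable def qp (Q : ℝ) (n : ℕ) : ℝ := ∏ i ∈ Finset.range n, (1 - Q ^ (i + 1))

lemma gb_mul (Q : ℝ) (M : ℕ) : ∀ a b, a + b = M → gb Q M a * qp Q a * qp Q b = qp Q M := by
  induction M with
  | zero => intro a b h; obtain ⟨rfl, rfl⟩ : a = 0 ∧ b = 0 := by omega
            simp [gb, qp]
  | succ M ih =>
    intro a b h
    cases a with
    | zero => obtain rfl : b = M + 1 := by omega
              simp [gb_zero, qp]
    | succ a =>
      cases b with
      | zero =>
        obtain rfl : a = M := by omega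
        have h1 := ih a 0 (by omega)
        simp only [gb, gb_gt Q a (a+1) (by omega)]
        have e : qp Q (a+1) = qp Q a * (1 - Q^(a+1)) := by simp [qp, Finset.prod_range_succ]
        rw [e]
        linear_combination (1 - Q^(a+1)) * h1
      | succ b =>
        obtain rfl : M = a + (b + 1) := by omega
        have h1 := ih a (b+1) (by omega)
        have h2 := ih (a+1) b (by omega)
        have e : ∀ a, qp Q (a+1) = qp Q a * (1 - Q^(a+1)) := by
          intro a; simp [qp, Finset.prod_range_succ]
        rw [e (a + (b+1))]
        rw [gb_succ]
        have h3 : gb Q (a+(b+1)) (a+1) * qp Q (a+1) * qp Q (b+1) =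
          qp Q (a + (b+1)) * (1 - Q^(b+1)) := by
          rw [e b]; linear_combination (1 - Q^(b+1)) * h2
        have h4 : gb Q (a+(b+1)) a * qp Q (a+1) * qp Q (b+1) =
          qp Q (a + (b+1)) * (1 - Q^(a+1)) := by
          rw [e a]; linear_combination (1 - Q^(a+1)) * h1
        linear_combination h4 + Q^(a+1) * h3

lemma q_binom (Q : ℝ) (M : ℕ) : ∀ x : ℝ, ∏ n ∈ Finset.range M, (1 + x * Q ^ n) =
    ∑ j ∈ Finset.range (M + 1), gb Q M j * Q ^ (j.choose 2) * x ^ j := by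
  induction M with
  | zero => intro x; simp [gb]
  | succ M ih =>
    intro x
    rw [Finset.prod_range_succ']
    have : ∀ n, 1 + x * Q^(n+1) = 1 + (x*Q) * Q^n := by intro n; ring
    simp only [this]
    rw [ih (x*Q), Finset.sum_range_succ' _ (M+1)]
    simp only [gb, pow_zero, mul_one, add_mul, Finset.sum_add_distrib, Nat.choose_zero_succ]
    have h1 : ∑ j ∈ Finset.range (M+1), gb Q M j * Q ^ ((j+1).choose 2) * x^(j+1)
      = x * ∑ j ∈ Finset.range (M+1), gb Q M j * Q ^ (j.choose 2) * (x*Q)^j := by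
      rw [Finset.mul_sum]
      refine Finset.sum_congr rfl fun j _ => ?_
      have : (j+1).choose 2 = j + j.choose 2 := by
        rw [Nat.choose_succ_succ' j 1]; simp
      rw [this]; ring
    have h2 : ∑ j ∈ Finset.range (M+1), Q^(j+1) * gb Q M (j+1) * Q ^ ((j+1).choose 2) * x^(j+1) + 1
      = ∑ j ∈ Finset.range (M+1), gb Q M j * Q ^ (j.choose 2) * (x*Q)^j := by
      rw [Finset.sum_range_succ, gb_gt Q M (M+1) (by omega), Finset.sum_range_succ' _ M]
      simp only [gb_zero]
      simp only [mul_zero, zero_mul, add_zero]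
      congr 1
      · refine Finset.sum_congr rfl fun j _ => ?_
        ring
      · simp
    rw [h1, ← h2]
    ring

lemma finite_jtp (q : ℝ) (hq : 0 < q) (u : ℝ) (m : ℕ) :
    (∏ n ∈ Finset.range m, (1 + q ^ ((n : ℝ) + 1/2 + u))) *
    (∏ n ∈ Finset.range m, (1 + q ^ ((n : ℝ) + 1/2 - u))) * q ^ (u^2/2) =
    ∑ j ∈ Finset.range (2 * m + 1), gb q (2*m) j * q ^ ((u + ((j:ℝ) - m))^2/2) := by
  have h := q_binom q (2*m) (q ^ (u + 1/2 - (m:ℝ)))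
  have hs : ∏ n ∈ Finset.range m, q ^ (u - 1/2 - (n:ℝ)) = q ^ (u * m - (m:ℝ)^2/2) := by
    clear h
    induction m with
    | zero => simp
    | succ m ih =>
      rw [Finset.prod_range_succ, ih, ← Real.rpow_add hq]
      congr 1; push_cast; ring
  have e1 : ∏ n ∈ Finset.range (2*m), (1 + q ^ (u + 1/2 - (m:ℝ)) * q ^ n) =
    q ^ (u * m - (m:ℝ)^2/2) * ((∏ n ∈ Finset.range m, (1 + q ^ ((n : ℝ) + 1/2 + u))) *
    (∏ n ∈ Finset.range m, (1 + q ^ ((n : ℝ) + 1/2 - u)))) := by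
    rw [two_mul, Finset.prod_range_add, ← Finset.prod_range_reflect _ m, mul_left_comm, ← hs,
      ← Finset.prod_mul_distrib (s := Finset.range m) (f := fun n : ℕ => q ^ (u - 1/2 - (n:ℝ))),
      mul_comm]
    refine congrArg₂ (· * ·) ?_ ?_
    · refine Finset.prod_congr rfl fun n hn => ?_
      rw [← Real.rpow_natCast, ← Real.rpow_add hq]
      congr 2; push_cast; ring
    · refine Finset.prod_congr rfl fun n hn => ?_
      have : n + 1 ≤ m := by simpa using hn
      rw [← Real.rpow_natCast, ← Real.rpow_add hq, mul_add, ← Real.rpow_add hq, mul_one, add_comm]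
      rw [show m - 1 - n = m - (n+1) by omega, Nat.cast_sub this]
      congr 2
      · push_cast; ring
      · rw [show u - 1/2 - (n:ℝ) + (n + 1/2 - u) = 0 by ring]; simp
  rw [e1] at h
  have e2 : q ^ (u * m - (m:ℝ)^2/2) * q ^ (u^2/2 - u * m + (m:ℝ)^2/2) = q ^ (u^2/2) := by
    rw [← Real.rpow_add hq]; congr 1; ring
  rw [← e2]
  have h' := congrArg (· * q ^ (u^2/2 - u * m + (m:ℝ)^2/2)) h
  rw [show ∀ a b c d : ℝ, a * b * (c * d) = c * (a*b) * d by intros; ring, h', Finset.sum_mul]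
  refine Finset.sum_congr rfl fun j _ => ?_
  rw [mul_assoc, mul_assoc, ← Real.rpow_natCast, ← Real.rpow_natCast, ← Real.rpow_mul hq.le,
    ← Real.rpow_add hq, ← Real.rpow_add hq, Nat.cast_choose_two]
  congr 2; ring

open Filter Topology

lemma summ_theta_nat (q : ℝ) (hq : 0 < q) (hq1 : q < 1) (u : ℝ) :
    Summable fun n : ℕ => q ^ ((u + (n:ℝ))^2/2) := by
  refine summable_of_ratio_test_tendsto_lt_one (l := 0) one_pos ?_ ?_
  · exact Eventually.of_forall fun n => (Real.rpow_pos_of_pos hq _).ne'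
  · have : ∀ n : ℕ, ‖q ^ ((u + ((n+1:ℕ):ℝ))^2/2)‖ / ‖q ^ ((u + (n:ℝ))^2/2)‖ =
        q ^ (u + 1/2) * q ^ n := by
      intro n
      rw [Real.norm_of_nonneg (Real.rpow_pos_of_pos hq _).le,
        Real.norm_of_nonneg (Real.rpow_pos_of_pos hq _).le, ← Real.rpow_sub hq,
        ← Real.rpow_natCast q n, ← Real.rpow_add hq]
      congr 1; push_cast; ring
    simp only [this]
    simpa using (tendsto_pow_atTop_nhds_zero_of_lt_one hq.le hq1).const_mul (q ^ (u + 1/2))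

lemma summ_theta (q : ℝ) (hq : 0 < q) (hq1 : q < 1) (u : ℝ) :
    Summable fun k : ℤ => q ^ ((u + (k:ℝ))^2/2) := by
  refine Summable.of_nat_of_neg ?_ ?_
  · simpa using summ_theta_nat q hq hq1 u
  · refine (summ_theta_nat q hq hq1 (-u)).congr fun n => ?_
    congr 1; push_cast; ring

lemma mult_sub (q : ℝ) (hq : 0 < q) (hq1 : q < 1) :
    Multipliable fun n : ℕ => (1 - q ^ (n+1)) := by
  have : Summable fun n : ℕ => - q ^ (n+1) :=
    ((summable_nat_add_iff 1).2 (summable_geometric_of_lt_one hq.le hq1)).neg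
  simpa [sub_eq_add_neg] using Real.multipliable_one_add_of_summable this

lemma mult_add (q : ℝ) (hq : 0 < q) (hq1 : q < 1) (a : ℝ) :
    Multipliable fun n : ℕ => (1 + q ^ ((n:ℝ) + a)) := by
  have : Summable fun n : ℕ => q ^ ((n:ℝ) + a) := by
    refine ((summable_geometric_of_lt_one hq.le hq1).mul_right (q^a)).congr fun n => ?_
    rw [← Real.rpow_natCast, ← Real.rpow_add hq]
  exact Real.multipliable_one_add_of_summable this

lemma qp_pos (q : ℝ) (hq : 0 < q) (hq1 : q < 1) (n : ℕ) : 0 < qp q n := by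
  refine Finset.prod_pos fun i _ => ?_
  have := pow_lt_one₀ hq.le hq1 (Nat.succ_ne_zero i)
  simp only [Nat.succ_eq_add_one] at this
  linarith

lemma qp_anti (q : ℝ) (hq : 0 < q) (hq1 : q < 1) : Antitone (qp q) := by
  refine antitone_nat_of_succ_le fun n => ?_
  have : qp q (n+1) = qp q n * (1 - q^(n+1)) := by simp [qp, Finset.prod_range_succ]
  rw [this]
  have h := qp_pos q hq hq1 n
  have : 0 < q^(n+1) := by positivity
  nlinarith

lemma qp_tendsto (q : ℝ) (hq : 0 < q) (hq1 : q < 1) :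
    Tendsto (qp q) atTop (𝓝 (∏' n : ℕ, (1 - q ^ (n+1)))) :=
  (mult_sub q hq hq1).hasProd.tendsto_prod_nat

lemma qinf_le (q : ℝ) (hq : 0 < q) (hq1 : q < 1) (n : ℕ) :
    ∏' n : ℕ, (1 - q ^ (n+1)) ≤ qp q n :=
  (qp_anti q hq hq1).le_of_tendsto (qp_tendsto q hq hq1) n

lemma qinf_pos (q : ℝ) (hq : 0 < q) (hq1 : q < 1) :
    0 < ∏' n : ℕ, (1 - q ^ (n+1)) := by
  have h0 : 0 ≤ ∏' n : ℕ, (1 - q ^ (n+1)) :=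
    ge_of_tendsto' (qp_tendsto q hq hq1) fun n => (qp_pos q hq hq1 n).le
  refine lt_of_le_of_ne h0 (Ne.symm ?_)
  have hs : Summable fun n : ℕ => ‖- q ^ (n+1)‖ :=
    ((summable_nat_add_iff 1).2 (summable_geometric_of_lt_one hq.le hq1)).neg.norm
  have := tprod_one_add_ne_zero_of_summable (f := fun n : ℕ => - q ^ (n+1)) ?_ hs
  · simpa [sub_eq_add_neg] using this
  · intro n
    have := pow_lt_one₀ hq.le hq1 (Nat.succ_ne_zero n)
    simp only [Nat.succ_eq_add_one] at this
    have : 0 < 1 + - q^(n+1) := by linarith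
    exact this.ne'

lemma addinf_pos (q : ℝ) (hq : 0 < q) (hq1 : q < 1) (a : ℝ) :
    0 < ∏' n : ℕ, (1 + q ^ ((n:ℝ) + a)) := by
  have : (1:ℝ) ≤ ∏' n : ℕ, (1 + q ^ ((n:ℝ) + a)) := by
    refine ge_of_tendsto' (mult_add q hq hq1 a).hasProd.tendsto_prod_nat fun n => ?_
    have : ∏ i ∈ Finset.range n, (1:ℝ) ≤ ∏ i ∈ Finset.range n, (1 + q ^ ((i:ℝ) + a)) := by
      refine Finset.prod_le_prod (fun _ _ => zero_le_one) fun i _ => ?_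
      have := Real.rpow_pos_of_pos hq ((i:ℝ)+a)
      linarith
    simpa using this
  linarith

lemma jtp (q : ℝ) (hq : 0 < q) (hq1 : q < 1) (u : ℝ) :
    ∑' k : ℤ, q ^ ((u + (k:ℝ))^2/2) =
    (∏' n : ℕ, (1 - q ^ (n+1))) * ((∏' n : ℕ, (1 + q ^ ((n:ℝ) + (1/2 + u)))) *
      (∏' n : ℕ, (1 + q ^ ((n:ℝ) + (1/2 - u)))) * q ^ (u^2/2)) := by
  set L := ∏' n : ℕ, (1 - q ^ (n+1)) with hL
  have hLpos : 0 < L := qinf_pos q hq hq1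
  let F : ℕ → ℤ → ℝ := fun m k => if -(m:ℤ) ≤ k then
    gb q (2*m) (k+m).toNat * q ^ ((u + (k:ℝ))^2/2) else 0
  have hF : ∀ m, ∑' k, F m k = (∏ n ∈ Finset.range m, (1 + q ^ ((n : ℝ) + (1/2 + u)))) *
    (∏ n ∈ Finset.range m, (1 + q ^ ((n : ℝ) + (1/2 - u)))) * q ^ (u^2/2) := by
    intro m
    have hinj : Function.Injective fun j : ℕ => (j:ℤ) - m := by
      intro a b h; simp only at h; omega
    rw [← hinj.tsum_eq]
    · have hj : ∀ j : ℕ, F m ((j:ℤ) - m) = gb q (2*m) j * q ^ ((u + ((j:ℝ) - m))^2/2) := by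
        intro j
        simp only [F]
        rw [if_pos (by omega)]
        have : ((j:ℤ) - m + m).toNat = j := by omega
        rw [this]; push_cast; rfl
      simp only [hj]
      rw [tsum_eq_sum (s := Finset.range (2*m+1)), ← finite_jtp q hq u m]
      · simp only [add_assoc, add_sub_assoc]
      · intro j hj
        rw [gb_gt q (2*m) j (by simpa using hj)]; simp
    · intro k hk
      simp only [Function.mem_support, F] at hk
      have : -(m:ℤ) ≤ k := by by_contra h; simp [h] at hk
      exact ⟨(k+m).toNat, by simp only; omega⟩
  have hgb : ∀ m a b, a + b = m → gb q m a = qp q m / (qp q a * qp q b) := by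
    intro m a b h
    rw [eq_div_iff (mul_pos (qp_pos q hq hq1 a) (qp_pos q hq hq1 b)).ne', ← gb_mul q m a b h]
    ring
  have hqp1 : ∀ m, qp q m ≤ 1 := fun m => by
    simpa [qp] using qp_anti q hq hq1 (Nat.zero_le m)
  have hlim : Tendsto (fun m => ∑' k, F m k) atTop (𝓝 (∑' k : ℤ, L⁻¹ * q ^ ((u + (k:ℝ))^2/2))) := by
    refine tendsto_tsum_of_dominated_convergence
      (bound := fun k : ℤ => (L*L)⁻¹ * q ^ ((u + (k:ℝ))^2/2))
      ((summ_theta q hq hq1 u).mul_left _) ?_ ?_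
    · intro k
      have h1 : Tendsto (fun m : ℕ => qp q (2*m) / (qp q (k+m).toNat * qp q (m-k).toNat) *
          q ^ ((u + (k:ℝ))^2/2)) atTop (𝓝 (L / (L * L) * q ^ ((u + (k:ℝ))^2/2))) := by
        refine Tendsto.mul_const _ (Tendsto.div ?_ (Tendsto.mul ?_ ?_) (by positivity))
        · refine (qp_tendsto q hq hq1).comp (tendsto_atTop_mono (fun m => ?_) tendsto_id)
          simp only [id]; omega
        · refine (qp_tendsto q hq hq1).comp (tendsto_atTop.2 fun b => ?_)
          filter_upwards [eventually_ge_atTop (b + k.natAbs)] with m hm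
          omega
        · refine (qp_tendsto q hq hq1).comp (tendsto_atTop.2 fun b => ?_)
          filter_upwards [eventually_ge_atTop (b + k.natAbs)] with m hm
          omega
      rw [show L / (L * L) = L⁻¹ by field_simp] at h1
      refine h1.congr' ?_
      filter_upwards [eventually_ge_atTop k.natAbs] with m hm
      simp only [F]
      rw [if_pos (by omega), hgb (2*m) (k+m).toNat (m-k).toNat (by omega)]
    · refine Eventually.of_forall fun m k => ?_
      have hp := Real.rpow_pos_of_pos hq ((u + (k:ℝ))^2/2)
      simp only [F]
      split_ifs with h
      · rw [norm_mul, Real.norm_of_nonneg hp.le, Real.norm_of_nonneg (gb_nonneg q hq.le _ _)]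
        refine mul_le_mul_of_nonneg_right ?_ hp.le
        by_cases hk : k ≤ m
        · rw [hgb (2*m) (k+m).toNat (m-k).toNat (by omega), ← one_div]
          have := qinf_le q hq hq1 (k+m).toNat
          have := qinf_le q hq hq1 (m-k).toNat
          refine div_le_div₀ zero_le_one (hqp1 _) (by positivity) ?_
          exact mul_le_mul (qinf_le q hq hq1 _) (qinf_le q hq hq1 _) hLpos.le (qp_pos q hq hq1 _).le
        · rw [gb_gt q _ _ (by omega)]; positivity
      · simp; positivity
  have hlim2 : Tendsto (fun m => ∑' k, F m k) atTop (𝓝 ((∏' n : ℕ, (1 + q ^ ((n:ℝ) + (1/2 + u)))) *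
      (∏' n : ℕ, (1 + q ^ ((n:ℝ) + (1/2 - u)))) * q ^ (u^2/2))) := by
    simp only [hF]
    exact (((mult_add q hq hq1 _).hasProd.tendsto_prod_nat).mul
      ((mult_add q hq hq1 _).hasProd.tendsto_prod_nat)).mul_const _
  rw [← tendsto_nhds_unique hlim hlim2, tsum_mul_left, mul_inv_cancel_left₀ hLpos.ne']

/-- weight -/
noncomputable def ew (q x : ℝ) : ENNReal := ENNReal.ofReal (q ^ x)

lemma ew_add (q : ℝ) (hq : 0 < q) (x y : ℝ) : ew q (x + y) = ew q x * ew q y := by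
  rw [ew, Real.rpow_add hq, ENNReal.ofReal_mul (Real.rpow_pos_of_pos hq _).le]; rfl

lemma ew_zero (q : ℝ) : ew q 0 = 1 := by simp [ew]

lemma ew_sum (q : ℝ) (hq : 0 < q) {ι : Type*} (s : Finset ι) (f : ι → ℝ) :
    ew q (∑ i ∈ s, f i) = ∏ i ∈ s, ew q (f i) := by
  classical
  induction s using Finset.induction_on with
  | empty => simp [ew_zero]
  | insert a s ha ih => rw [Finset.sum_insert ha, Finset.prod_insert ha, ew_add q hq, ih]

lemma toReal_tsum_ew (q : ℝ) (hq : 0 < q) {ι : Type*} (f : ι → ℝ) :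
    ∑' i, q ^ (f i) = (∑' i, ew q (f i)).toReal := by
  simp only [ew]
  rw [ENNReal.tsum_toReal_eq (fun i => ENNReal.ofReal_ne_top)]
  refine tsum_congr fun i => ?_
  rw [ENNReal.toReal_ofReal (Real.rpow_pos_of_pos hq _).le]

lemma tsum_pi_prod (K : ℕ) : ∀ {α : Fin K → Type} (f : ∀ j, α j → ENNReal),
    ∑' x : (∀ j, α j), ∏ j, f j (x j) = ∏ j, ∑' a, f j a := by
  induction K with
  | zero => intro α f; simp
  | succ K ih =>
    intro α f
    rw [← (Fin.consEquiv α).tsum_eq, ENNReal.tsum_prod', Fin.prod_univ_succ, ← ih,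
      ← ENNReal.tsum_mul_right]
    refine tsum_congr fun a => ?_
    rw [← ENNReal.tsum_mul_left]
    refine tsum_congr fun x => ?_
    simp [Fin.prod_univ_succ, Fin.consEquiv]

/-- the shifts -/
noncomputable def uu (l : ℕ) (i : Fin l) : ℝ := ((l:ℝ) - 1 - 2 * (i.val:ℝ)) / (2 * l)

/-- fiber sums -/
noncomputable def GG (q : ℝ) (l : ℕ) (n : ℤ) : ENNReal :=
  ∑' k : {k : Fin l → ℤ // ∑ i, k i = n}, ew q ((1/2 : ℝ) * ∑ i, (uu l i + (k.1 i : ℝ))^2)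

lemma uu_rot (l : ℕ) (i : Fin (l+1)) : uu (l+1) i + (if i = Fin.last l then 1 else 0) =
    uu (l+1) (finRotate (l+1) i) + 1/((l+1:ℕ):ℝ) := by
  have : ((l:ℝ)+1) ≠ 0 := by positivity
  by_cases h : i = Fin.last l
  · subst h
    simp only [uu, finRotate_last, if_true]
    simp; field_simp; ring
  · have hi : i.val < l := Fin.val_lt_last h
    simp only [uu, h, if_false, coe_finRotate_of_ne_last h]
    push_cast; field_simp; ring

lemma uu_sum (l : ℕ) : ∑ i, uu l i = 0 := by
  have h : ∑ i, uu l i = ∑ i, uu l (Fin.rev i) := (Equiv.sum_comp Fin.revPerm (uu l)).symm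
  have h2 : ∀ i : Fin l, uu l (Fin.rev i) = - uu l i := by
    intro i
    have := i.isLt
    simp only [uu, Fin.val_rev]
    rw [Nat.cast_sub (by omega)]
    push_cast; ring
  simp only [h2, Finset.sum_neg_distrib] at h
  linarith

/-- cyclic shift -/
def shiftEquiv (l : ℕ) (n : ℤ) :
    {k : Fin (l+1) → ℤ // ∑ i, k i = n} ≃ {k : Fin (l+1) → ℤ // ∑ i, k i = n + 1} where
  toFun k := ⟨fun i => k.1 (finRotate (l+1) i) + (if i = Fin.last l then 1 else 0), by
    rw [Finset.sum_add_distrib, Equiv.sum_comp (finRotate (l+1)) k.1, k.2]; simp⟩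
  invFun k := ⟨fun i => k.1 ((finRotate (l+1)).symm i) -
      (if (finRotate (l+1)).symm i = Fin.last l then 1 else 0), by
    rw [Equiv.sum_comp (finRotate (l+1)).symm
      (fun i => k.1 i - (if i = Fin.last l then 1 else 0)), Finset.sum_sub_distrib, k.2]; simp⟩
  left_inv k := by ext i; simp
  right_inv k := by ext i; simp

lemma GG_succ (q : ℝ) (hq : 0 < q) (l : ℕ) (n : ℤ) :
    GG q (l+1) (n+1) = ew q ((2*(n:ℝ)+1)/(2*((l+1:ℕ):ℝ))) * GG q (l+1) n := by
  unfold GG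
  rw [← (shiftEquiv l n).tsum_eq, ← ENNReal.tsum_mul_left]
  refine tsum_congr fun k => ?_
  rw [← ew_add q hq]
  congr 1
  have h1 : ∀ i, uu (l+1) i + ((((shiftEquiv l n) k).1 i : ℤ) : ℝ) =
      (fun i => uu (l+1) i + (k.1 i : ℝ) + 1/((l+1:ℕ):ℝ)) (finRotate (l+1) i) := by
    intro i
    have := uu_rot l i
    simp only [shiftEquiv, Equiv.coe_fn_mk]
    push_cast at this ⊢
    linarith
  simp only [h1]
  rw [Equiv.sum_comp (finRotate (l+1)) (fun i => (uu (l+1) i + (k.1 i : ℝ) + 1/((l+1:ℕ):ℝ))^2)]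
  have h2 : ∑ i, (k.1 i : ℝ) = n := by exact_mod_cast k.2
  have h3 := uu_sum (l+1)
  have : ((l:ℝ)+1) ≠ 0 := by positivity
  have h4 : ∑ i, (uu (l+1) i + (k.1 i : ℝ) + 1/((l+1:ℕ):ℝ))^2 =
    ∑ i, (uu (l+1) i + (k.1 i : ℝ))^2 + 2/((l+1:ℕ):ℝ) * (∑ i, uu (l+1) i + ∑ i, (k.1 i:ℝ)) +
      1/((l+1:ℕ):ℝ) := by
    have h5 : 1/((l+1:ℕ):ℝ) = ∑ i : Fin (l+1), (1/((l+1:ℕ):ℝ))^2 := by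
      simp only [Finset.sum_const, Finset.card_univ, Fintype.card_fin, nsmul_eq_mul]
      push_cast; field_simp
    have h6 : ∑ i, (uu (l+1) i + (k.1 i : ℝ))^2 +
        2/((l+1:ℕ):ℝ) * (∑ i, uu (l+1) i + ∑ i, (k.1 i:ℝ)) +
        ∑ i : Fin (l+1), (1/((l+1:ℕ):ℝ))^2 =
        ∑ i, (uu (l+1) i + (k.1 i : ℝ) + 1/((l+1:ℕ):ℝ))^2 := by
      rw [← Finset.sum_add_distrib, Finset.mul_sum, ← Finset.sum_add_distrib,
        ← Finset.sum_add_distrib]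
      exact Finset.sum_congr rfl fun i _ => by ring
    rw [← h6, ← h5]
  rw [h4, h2, h3]
  push_cast; field_simp; ring

lemma GG_eq (q : ℝ) (hq : 0 < q) (l : ℕ) (hl : 0 < l) (n : ℤ) :
    GG q l n = ew q ((n:ℝ)^2/(2*l)) * GG q l 0 := by
  obtain ⟨l, rfl⟩ : ∃ m, l = m + 1 := ⟨l - 1, by omega⟩
  have : ((l:ℝ)+1) ≠ 0 := by positivity
  induction n using Int.induction_on with
  | zero => simp [ew_zero]
  | succ n ih =>
    rw [GG_succ q hq, ih, ← mul_assoc, ← ew_add q hq]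
    congr 2; push_cast; field_simp; ring
  | pred n ih =>
    have h := GG_succ q hq l (-(n:ℤ) - 1)
    rw [sub_add_cancel, ih] at h
    have h' := congrArg (ew q (-((2*((-(n:ℤ)-1 : ℤ):ℝ)+1)/(2*((l+1:ℕ):ℝ)))) * ·) h
    simp only [← mul_assoc, ← ew_add q hq] at h'
    rw [neg_add_cancel, ew_zero, one_mul] at h'
    rw [← h']
    congr 2; push_cast; field_simp; ring

lemma block_eq (q : ℝ) (hq : 0 < q) (l : ℕ) (hl : 0 < l) (r : ℝ) (n : ℤ) :
    ∑' k : {k : Fin l → ℤ // ∑ i, k i = n},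
      ew q ((1/2 : ℝ) * ∑ i, (r + uu l i + (k.1 i : ℝ))^2) =
    GG q l 0 * ew q (((n:ℝ) + l * r)^2/(2*l)) := by
  have hl' : (l:ℝ) ≠ 0 := by positivity
  have h : ∀ k : {k : Fin l → ℤ // ∑ i, k i = n},
      ew q ((1/2 : ℝ) * ∑ i, (r + uu l i + (k.1 i : ℝ))^2) =
      ew q (l * r^2/2 + r * n) * ew q ((1/2 : ℝ) * ∑ i, (uu l i + (k.1 i : ℝ))^2) := by
    intro k
    rw [← ew_add q hq]
    congr 1
    have h2 : ∑ i, (k.1 i : ℝ) = n := by exact_mod_cast k.2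
    have h3 := uu_sum l
    have h4 : ∑ i, (r + uu l i + (k.1 i : ℝ))^2 = ∑ i, (uu l i + (k.1 i : ℝ))^2 + l * r^2 +
        2 * r * (∑ i, uu l i + ∑ i, (k.1 i : ℝ)) := by
      have : (l:ℝ) * r^2 = ∑ i : Fin l, r^2 := by simp
      rw [this, ← Finset.sum_add_distrib, ← Finset.sum_add_distrib, Finset.mul_sum,
        ← Finset.sum_add_distrib]
      exact Finset.sum_congr rfl fun i _ => by ring
    rw [h4, h2, h3]; ring
  simp only [h]
  rw [ENNReal.tsum_mul_left]
  change _ * GG q l n = _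
  rw [GG_eq q hq l hl, ← mul_assoc, ← ew_add q hq, mul_comm]
  congr 2; field_simp; ring

lemma theta_ew (q : ℝ) (hq : 0 < q) (hq1 : q < 1) (u : ℝ) :
    ∑' k : ℤ, ew q ((u + (k:ℝ))^2/2) = ENNReal.ofReal (
    (∏' n : ℕ, (1 - q ^ (n+1))) * ((∏' n : ℕ, (1 + q ^ ((n:ℝ) + (1/2 + u)))) *
      (∏' n : ℕ, (1 + q ^ ((n:ℝ) + (1/2 - u)))) * q ^ (u^2/2))) := by
  rw [← jtp q hq hq1 u, ENNReal.ofReal_tsum_of_nonneg (fun k => (Real.rpow_pos_of_pos hq _).le)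
    (summ_theta q hq hq1 u)]
  rfl

lemma prod_range_mul' (f : ℕ → ℝ) (l M : ℕ) :
    ∏ m ∈ Finset.range (M * l), f m = ∏ n ∈ Finset.range M, ∏ i : Fin l, f (n * l + i) := by
  induction M with
  | zero => simp
  | succ M ih =>
    rw [add_mul, one_mul, Finset.prod_range_add, Finset.prod_range_succ, ih]
    congr 1
    exact (Fin.prod_univ_eq_prod_range (fun i => f (M * l + i)) l).symm

lemma prodB (q : ℝ) (hq : 0 < q) (hq1 : q < 1) (l : ℕ) (hl : 0 < l) :
    ∏ i : Fin l, ∏' n : ℕ, (1 + q ^ ((n:ℝ) + (1/2 - uu l i))) =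
    ∏' n : ℕ, (1 + (q ^ (1/(l:ℝ))) ^ ((n:ℝ) + 1/2)) := by
  have hl' : (l:ℝ) ≠ 0 := by positivity
  have hQ : 0 < q ^ (1/(l:ℝ)) := Real.rpow_pos_of_pos hq _
  have hQ1 : q ^ (1/(l:ℝ)) < 1 := Real.rpow_lt_one hq.le hq1 (by positivity)
  have t1 : Tendsto (fun M => ∏ i : Fin l, ∏ n ∈ Finset.range M, (1 + q ^ ((n:ℝ) + (1/2 - uu l i))))
      atTop (𝓝 (∏ i : Fin l, ∏' n : ℕ, (1 + q ^ ((n:ℝ) + (1/2 - uu l i))))) :=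
    tendsto_finsetProd _ fun i _ => (mult_add q hq hq1 _).hasProd.tendsto_prod_nat
  have t2 : Tendsto (fun M : ℕ => ∏ m ∈ Finset.range (M * l), (1 + (q ^ (1/(l:ℝ))) ^ ((m:ℝ) + 1/2)))
      atTop (𝓝 (∏' n : ℕ, (1 + (q ^ (1/(l:ℝ))) ^ ((n:ℝ) + 1/2)))) :=
    ((mult_add _ hQ hQ1 _).hasProd.tendsto_prod_nat).comp
      (tendsto_atTop_mono (fun M => Nat.le_mul_of_pos_right M hl) tendsto_id)
  refine tendsto_nhds_unique t1 (t2.congr fun M => ?_)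
  rw [prod_range_mul', Finset.prod_comm]
  refine Finset.prod_congr rfl fun i _ => Finset.prod_congr rfl fun n _ => ?_
  rw [← Real.rpow_mul hq.le]
  congr 2
  simp only [uu]; push_cast; field_simp; ring

lemma prodA (q : ℝ) (hq : 0 < q) (hq1 : q < 1) (l : ℕ) (hl : 0 < l) :
    ∏ i : Fin l, ∏' n : ℕ, (1 + q ^ ((n:ℝ) + (1/2 + uu l i))) =
    ∏' n : ℕ, (1 + (q ^ (1/(l:ℝ))) ^ ((n:ℝ) + 1/2)) := by
  rw [← prodB q hq hq1 l hl, ← Equiv.prod_comp Fin.revPerm]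
  refine Finset.prod_congr rfl fun i _ => ?_
  have : uu l (Fin.revPerm i) = - uu l i := by
    have := i.isLt
    simp only [uu, Fin.revPerm_apply, Fin.val_rev]
    rw [Nat.cast_sub (by omega)]
    push_cast; ring
  rw [this]; simp only [sub_eq_add_neg]

lemma uu_sq (l : ℕ) (hl : 0 < l) : ∑ i, (uu l i)^2/2 = ((l:ℝ)^2 - 1)/(24*l) := by
  have hl' : (l:ℝ) ≠ 0 := by positivity
  have h : ∀ (c : ℝ) (n : ℕ), ∑ i ∈ Finset.range n, (c - 2 * (i:ℝ))^2 =
      n * c^2 - 2 * c * n * (n-1) + 4 * ((n-1) * n * (2*n-1)/6) := by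
    intro c n
    induction n with
    | zero => simp
    | succ n ih => rw [Finset.sum_range_succ, ih]; push_cast; ring
  have h2 : ∀ i : Fin l, (uu l i)^2/2 = (1/(8*(l:ℝ)^2)) * ((l:ℝ) - 1 - 2 * (i.val:ℝ))^2 := by
    intro i; simp only [uu]; field_simp; ring
  simp only [h2]
  rw [← Finset.mul_sum, Fin.sum_univ_eq_sum_range (fun i => ((l:ℝ) - 1 - 2 * (i:ℝ))^2) l, h]
  field_simp; ring

lemma tsum_fiber {α β : Type*} (f : α → β) (g : α → ENNReal) :
    ∑' x, g x = ∑' y, ∑' x : {x // f x = y}, g x.1 := by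
  rw [← ENNReal.tsum_sigma' (fun s : (Σ y, {x // f x = y}) => g s.2.1),
    ← (Equiv.sigmaFiberEquiv f).tsum_eq]
  rfl

lemma GG_zero (q : ℝ) (hq : 0 < q) (hq1 : q < 1) (l : ℕ) (hl : 0 < l) :
    GG q l 0 = ENNReal.ofReal (q ^ (((l : ℝ) ^ 2 - 1) / (24 * l)) *
          (∏' k : ℕ, (1 - q ^ (k + 1)) ^ l) /
          ∏' k : ℕ, (1 - q ^ (((k : ℝ) + 1) / l))) := by
  have hl' : (l:ℝ) ≠ 0 := by positivity
  have hQ : 0 < q ^ (1/(l:ℝ)) := Real.rpow_pos_of_pos hq _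
  have hQ1 : q ^ (1/(l:ℝ)) < 1 := Real.rpow_lt_one hq.le hq1 (by positivity)
  have hden : ∏' k : ℕ, (1 - q ^ (((k : ℝ) + 1) / l)) = ∏' k : ℕ, (1 - (q ^ (1/(l:ℝ))) ^ (k+1)) := by
    refine tprod_congr fun k => ?_
    rw [← Real.rpow_natCast, ← Real.rpow_mul hq.le]
    congr 2; push_cast; ring
  have hnum : ∏' k : ℕ, (1 - q ^ (k + 1)) ^ l = (∏' k : ℕ, (1 - q ^ (k + 1))) ^ l := by
    have := ((mult_sub q hq hq1).hasProd.tendsto_prod_nat).pow l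
    refine HasProd.tprod_eq ?_
    have h2 := Multipliable.tprod_finsetProd (s := Finset.range l)
      (f := fun (_ : ℕ) (k : ℕ) => (1 - q ^ (k+1))) (fun _ _ => mult_sub q hq hq1)
    have h3 := hasProd_prod (s := Finset.range l)
      (f := fun (_ : ℕ) (k : ℕ) => (1 - q ^ (k+1))) (fun _ _ => (mult_sub q hq hq1).hasProd)
    simpa using h3
  set φ := ∏' k : ℕ, (1 - q ^ (k + 1)) with hφ
  set φQ := ∏' k : ℕ, (1 - (q ^ (1/(l:ℝ))) ^ (k+1)) with hφQ
  set Ψ := ∏' n : ℕ, (1 + (q ^ (1/(l:ℝ))) ^ ((n:ℝ) + 1/2)) with hΨ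
  have pφ : 0 < φ := qinf_pos q hq hq1
  have pφQ : 0 < φQ := qinf_pos _ hQ hQ1
  have pΨ : 0 < Ψ := addinf_pos _ hQ hQ1 _
  have pp : 0 < q ^ (((l : ℝ) ^ 2 - 1) / (24 * l)) := Real.rpow_pos_of_pos hq _
  -- total sum two ways
  have e1 : ∑' k : Fin l → ℤ, ew q ((1/2 : ℝ) * ∑ i, (uu l i + (k i : ℝ))^2) =
      ENNReal.ofReal (φ ^ l * (Ψ * Ψ * q ^ (((l : ℝ) ^ 2 - 1) / (24 * l)))) := by
    have : ∀ k : Fin l → ℤ, ew q ((1/2 : ℝ) * ∑ i, (uu l i + (k i : ℝ))^2) =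
        ∏ i, ew q ((uu l i + (k i : ℝ))^2/2) := by
      intro k
      rw [← ew_sum q hq, Finset.mul_sum]
      congr 1
      exact Finset.sum_congr rfl fun i _ => by ring
    simp only [this]
    rw [tsum_pi_prod l (α := fun _ => ℤ) (fun i (k : ℤ) => ew q ((uu l i + (k : ℝ))^2/2))]
    simp only [theta_ew q hq hq1]
    rw [← ENNReal.ofReal_prod_of_nonneg]
    · congr 1
      rw [Finset.prod_mul_distrib, Finset.prod_mul_distrib, Finset.prod_mul_distrib,
        prodA q hq hq1 l hl, prodB q hq hq1 l hl, ← uu_sq l hl, Real.rpow_sum_of_pos hq]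
      simp only [Finset.prod_const, Finset.card_univ, Fintype.card_fin, hφ, hΨ]
    · intro i _
      have := addinf_pos q hq hq1 (1/2 + uu l i)
      have := addinf_pos q hq hq1 (1/2 - uu l i)
      have := Real.rpow_pos_of_pos hq ((uu l i)^2/2)
      positivity
  have e2 : ∑' k : Fin l → ℤ, ew q ((1/2 : ℝ) * ∑ i, (uu l i + (k i : ℝ))^2) =
      ENNReal.ofReal (φQ * (Ψ * Ψ)) * GG q l 0 := by
    rw [tsum_fiber (fun k : Fin l → ℤ => ∑ i, k i)]
    change ∑' n, GG q l n = _
    rw [tsum_congr (GG_eq q hq l hl), ENNReal.tsum_mul_right]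
    congr 1
    have := theta_ew _ hQ hQ1 0
    simp only [add_zero, sub_zero] at this
    rw [← hφQ, ← hΨ] at this
    simp only [zero_add, ne_eq, OfNat.ofNat_ne_zero, not_false_eq_true, zero_pow, zero_div,
      Real.rpow_zero, mul_one] at this
    rw [← this]
    refine tsum_congr fun n => ?_
    rw [ew, ew, ← Real.rpow_mul hq.le]
    congr 2; field_simp
  rw [e1] at e2
  rw [hden, hnum]
  have e3 : ENNReal.ofReal (φ ^ l * (Ψ * Ψ * q ^ (((l : ℝ) ^ 2 - 1) / (24 * l)))) =
      ENNReal.ofReal (φQ * (Ψ * Ψ)) *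
      ENNReal.ofReal (q ^ (((l : ℝ) ^ 2 - 1) / (24 * l)) * φ ^ l / φQ) := by
    rw [← ENNReal.ofReal_mul (by positivity)]
    congr 1; field_simp
  rw [e3] at e2
  exact ((ENNReal.mul_right_inj (by simp; positivity) ENNReal.ofReal_ne_top).1 e2).symm

lemma tsum_sub' {α : Type*} (p : α → Prop) (f : α → ENNReal) :
    ∑' x : {x // p x}, f x.1 = ∑' x, Set.indicator {x | p x} f x :=
  tsum_subtype {x | p x} f

lemma sigma_bij (K : ℕ) (l : Fin K → ℕ) : Function.Bijective
    (fun (s : Σ n : Fin K → ℤ, ∀ j, {k : Fin (l j) → ℤ // ∑ i, k i = n j}) (j : Fin K) =>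
      (s.2 j).1) := by
  constructor
  · rintro ⟨n, y⟩ ⟨n', y'⟩ h
    have h' : ∀ j, (y j).1 = (y' j).1 := fun j => congrFun h j
    have hn : n = n' := by
      funext j; rw [← (y j).2, ← (y' j).2, h' j]
    subst hn
    have : y = y' := by funext j; exact Subtype.ext (h' j)
    rw [this]
  · intro x
    exact ⟨⟨fun j => ∑ i, x j i, fun j => ⟨x j, rfl⟩⟩, rfl⟩



/-- Factorized (Dedekind-eta) form of the lattice theta function `Θ_{L_S}(v;q)`
    for `v` the concatenation of the blocks `(r_j + (l_j − 1 − 2m)/(2l_j))`,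
    components indexed by the sigma type `(j : Fin K) × Fin (l j)`:
    the `A_{l_j−1}` theta factors are replaced by
    `q^((l_j²−1)/(24 l_j)) · ∏(1−q^k)^{l_j} / ∏(1−q^(k/l_j))`. -/
theorem stmt3 (K : ℕ) (hK : 1 ≤ K) (l : Fin K → ℕ) (hl : ∀ j, 0 < l j)
    (r : Fin K → ℝ) (S : Set ℤ) (q : ℝ) (hq0 : 0 < q) (hq1 : q < 1) :
    (∑' k : {k : ((j : Fin K) × Fin (l j)) → ℤ // (∑ i, k i) ∈ S},
        q ^ ((1 / 2 : ℝ) * ∑ i : (j : Fin K) × Fin (l j),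
          ((r i.1 + ((l i.1 : ℝ) - 1 - 2 * (i.2.val : ℝ)) / (2 * l i.1)) + (k.1 i : ℝ)) ^ 2)) =
      (∏ j : Fin K, q ^ (((l j : ℝ) ^ 2 - 1) / (24 * l j)) *
          (∏' k : ℕ, (1 - q ^ (k + 1)) ^ (l j)) /
          ∏' k : ℕ, (1 - q ^ (((k : ℝ) + 1) / (l j)))) *
        (∑' n : {n : Fin K → ℤ // (∑ j, n j) ∈ S},
          q ^ (∑ j : Fin K, ((n.1 j : ℝ) + (l j : ℝ) * r j) ^ 2 / (2 * l j))) := by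
  have hC : ∀ j, 0 ≤ q ^ (((l j : ℝ) ^ 2 - 1) / (24 * l j)) *
          (∏' k : ℕ, (1 - q ^ (k + 1)) ^ (l j)) /
          ∏' k : ℕ, (1 - q ^ (((k : ℝ) + 1) / (l j))) := by
    intro j
    have h1 : ∀ k : ℕ, 0 ≤ (1 - q ^ (k + 1)) ^ (l j) := fun k =>
      pow_nonneg (sub_nonneg.2 (pow_le_one₀ hq0.le hq1.le)) _
    have h2 : ∀ k : ℕ, 0 ≤ (1 - q ^ (((k : ℝ) + 1) / (l j))) := fun k =>
      sub_nonneg.2 (Real.rpow_le_one hq0.le hq1.le (by positivity))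
    refine div_nonneg (mul_nonneg (Real.rpow_pos_of_pos hq0 _).le ?_) ?_
    · by_cases h : Multipliable fun k : ℕ => (1 - q ^ (k + 1)) ^ (l j)
      · exact ge_of_tendsto' h.hasProd.tendsto_prod_nat fun n =>
          Finset.prod_nonneg fun k _ => h1 k
      · rw [tprod_eq_one_of_not_multipliable h]; exact zero_le_one
    · by_cases h : Multipliable fun k : ℕ => (1 - q ^ (((k : ℝ) + 1) / (l j)))
      · exact ge_of_tendsto' h.hasProd.tendsto_prod_nat fun n =>
          Finset.prod_nonneg fun k _ => h2 k
      · rw [tprod_eq_one_of_not_multipliable h]; exact zero_le_one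
  rw [toReal_tsum_ew q hq0, toReal_tsum_ew q hq0,
    ← ENNReal.toReal_ofReal (Finset.prod_nonneg fun j _ => hC j), ← ENNReal.toReal_mul,
    ENNReal.ofReal_prod_of_nonneg fun j _ => hC j]
  congr 1
  have hG : ∀ j, ENNReal.ofReal (q ^ (((l j : ℝ) ^ 2 - 1) / (24 * l j)) *
          (∏' k : ℕ, (1 - q ^ (k + 1)) ^ (l j)) /
          ∏' k : ℕ, (1 - q ^ (((k : ℝ) + 1) / (l j)))) = GG q (l j) 0 := fun j =>
    (GG_zero q hq0 hq1 (l j) (hl j)).symm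
  simp only [hG]
  classical
  rw [tsum_sub' (fun k : ((j : Fin K) × Fin (l j)) → ℤ => (∑ i, k i) ∈ S)
    (fun k => ew q ((1 / 2 : ℝ) * ∑ i : (j : Fin K) × Fin (l j),
          ((r i.1 + ((l i.1 : ℝ) - 1 - 2 * (i.2.val : ℝ)) / (2 * l i.1)) + (k i : ℝ)) ^ 2)),
    tsum_sub' (fun n : Fin K → ℤ => (∑ j, n j) ∈ S)
    (fun n => ew q (∑ j : Fin K, ((n j : ℝ) + (l j : ℝ) * r j) ^ 2 / (2 * l j))),
    ← ENNReal.tsum_mul_left,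
    ← (Equiv.piCurry (fun (j : Fin K) (_ : Fin (l j)) => ℤ)).symm.tsum_eq,
    ← (Equiv.ofBijective _ (sigma_bij K l)).tsum_eq, ENNReal.tsum_sigma']
  refine tsum_congr fun n => ?_
  have hsum : ∀ y : ∀ j, {k : Fin (l j) → ℤ // ∑ i, k i = n j},
      ∑ i : (j : Fin K) × Fin (l j), ((y i.1).1 i.2) = ∑ j, n j := by
    intro y
    rw [Fintype.sum_sigma]
    exact Finset.sum_congr rfl fun j _ => (y j).2
  have hterm : ∀ y : ∀ j, {k : Fin (l j) → ℤ // ∑ i, k i = n j},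
      ew q ((1 / 2 : ℝ) * ∑ i : (j : Fin K) × Fin (l j),
          ((r i.1 + ((l i.1 : ℝ) - 1 - 2 * (i.2.val : ℝ)) / (2 * l i.1)) +
            (((y i.1).1 i.2 : ℤ) : ℝ)) ^ 2) =
      ∏ j, ew q ((1/2 : ℝ) * ∑ i, (r j + uu (l j) i + ((y j).1 i : ℝ))^2) := by
    intro y
    rw [← ew_sum q hq0, Fintype.sum_sigma, Finset.mul_sum]
    rfl
  by_cases hS : ∑ j, n j ∈ S
  · rw [Set.indicator_of_mem (by exact hS), ew_sum q hq0, ← Finset.prod_mul_distrib]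
    simp only [← block_eq q hq0 _ (hl _)]
    rw [← tsum_pi_prod K (α := fun j => {k : Fin (l j) → ℤ // ∑ i, k i = n j})
      (fun j k => ew q ((1/2 : ℝ) * ∑ i, (r j + uu (l j) i + (k.1 i : ℝ))^2))]
    refine tsum_congr fun y => ?_
    rw [Set.indicator_of_mem]
    · exact hterm y
    · change ∑ i : (j : Fin K) × Fin (l j), ((y i.1).1 i.2) ∈ S
      rw [hsum y]; exact hS
  · rw [Set.indicator_of_notMem (by exact hS), mul_zero, ENNReal.tsum_eq_zero]
    intro y
    rw [Set.indicator_of_notMem]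
    change ¬ ∑ i : (j : Fin K) × Fin (l j), ((y i.1).1 i.2) ∈ S
    rw [hsum y]; exact hS
end

section
/- Let N ≥ 1 and let v ∈ ℝ^N have first component v_1 = 1/2. Then for every real q with 0 < q < 1: ∑ over k ∈ ℤ^N with k_1 + … + k_N even of q^((1/2)·∑_{i=1}^N (v_i+k_i)²) equals one half of the sum over all k ∈ ℤ^N of q^((1/2)·∑_{i=1}^N (v_i+k_i)²). Equivalently, Θ_{D_N}(v;q) = (1/2)·Θ_{B_N}(v;q) whenever some component of v equals 1/2. -/
open scoped BigOperators

/-- `Θ_{D_N}(v;q) = (1/2)·Θ_{B_N}(v;q)` whenever a component of `v` equals `1/2`. -/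
theorem stmt4 (N : ℕ) (hN : 1 ≤ N) (v : Fin N → ℝ) (hv : v ⟨0, hN⟩ = 1 / 2)
    (q : ℝ) (hq0 : 0 < q) (hq1 : q < 1) :
    (∑' k : {k : Fin N → ℤ // Even (∑ i, k i)},
        q ^ ((1 / 2 : ℝ) * ∑ i : Fin N, (v i + (k.1 i : ℝ)) ^ 2)) =
      (1 / 2) * ∑' k : Fin N → ℤ,
        q ^ ((1 / 2 : ℝ) * ∑ i : Fin N, (v i + (k i : ℝ)) ^ 2) := by
  classical
  set i0 : Fin N := ⟨0, hN⟩ with hi0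
  set f : (Fin N → ℤ) → ℝ := fun k =>
    q ^ ((1 / 2 : ℝ) * ∑ i : Fin N, (v i + (k i : ℝ)) ^ 2) with hf
  let g : (Fin N → ℤ) → (Fin N → ℤ) := fun k => Function.update k i0 (-1 - k i0)
  have hg : Function.Involutive g := by
    intro k
    simp [g]
  have hfg : ∀ k, f (g k) = f k := by
    intro k
    simp only [hf]
    congr 2
    apply Finset.sum_congr rfl
    intro i _
    by_cases h : i = i0
    · subst h
      simp only [g, Function.update_self, hv]
      push_cast
      ring
    · simp [g, Function.update_of_ne h]
  have hsum : ∀ k, ∑ i, g k i = (∑ i, k i) - 1 - 2 * k i0 := by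
    intro k
    have h1 : ∑ i, g k i = (-1 - k i0) + ∑ i ∈ Finset.univ \ {i0}, k i :=
      Finset.sum_update_of_mem (Finset.mem_univ i0) k _
    have h2 := Finset.sum_eq_add_sum_sdiff_singleton_of_mem (Finset.mem_univ i0) k
    rw [h1, h2]
    ring
  let S : Set (Fin N → ℤ) := {k | Even (∑ i, k i)}
  have hS : ∀ k, k ∈ S ↔ g k ∈ Sᶜ := by
    intro k
    simp only [S, Set.mem_compl_iff, Set.mem_setOf_eq, hsum, Int.even_iff]
    omega
  let e : S ≃ (Sᶜ : Set (Fin N → ℤ)) := (hg.toPerm g).subtypeEquiv hS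
  have he : ∀ k : S, f (e k : Fin N → ℤ) = f k := fun k => hfg k
  have het : ∑' k : (Sᶜ : Set (Fin N → ℤ)), f k = ∑' k : S, f k := by
    rw [← e.tsum_eq]
    exact tsum_congr he
  change ∑' k : S, f k = 1 / 2 * ∑' k, f k
  by_cases hs : Summable (fun k : S => f k)
  · have hc : Summable (fun k : (Sᶜ : Set (Fin N → ℤ)) => f k) := by
      rw [← e.summable_iff]
      exact hs.congr fun k => (he k).symm
    have := Summable.tsum_add_tsum_compl (f := f) (s := S) hs hc
    rw [het] at this
    linarith
  · have hn : ¬ Summable f := fun h => hs (h.subtype S)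
    rw [tsum_eq_zero_of_not_summable hs, tsum_eq_zero_of_not_summable hn, mul_zero]
end

section
/- For every real q with 0 < q < 1 one has 2·∏_{k=1}^∞ (1 + q^k)² = q^(−1/8) · (∑_{n∈ℤ} q^((1/2)(n+1/2)²)) / ∏_{k=1}^∞ (1 − q^k). -/
open scoped BigOperators

section helpers

noncomputable def bzF (q : ℝ) (n : ℕ) : ℝ := ∏ k ∈ Finset.range n, (1 - q ^ (k + 1))

noncomputable def bzG (q : ℝ) (n : ℤ) : ℝ := if n < 0 then 0 else (bzF q n.toNat)⁻¹

noncomputable def bzW (q : ℝ) (j : ℤ) : ℝ := q ^ ((1 / 2 : ℝ) * ((j : ℝ) + 1 / 2) ^ 2)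

noncomputable def bzA (q : ℝ) (m : ℕ) (j : ℤ) : ℝ :=
  bzF q (2 * m + 1) * bzG q (m - j) * bzG q (m + 1 + j) * bzW q j

lemma bzF_pos {q : ℝ} (hq0 : 0 < q) (hq1 : q < 1) (n : ℕ) : 0 < bzF q n := by
  apply Finset.prod_pos
  intro k _
  have := pow_lt_one₀ hq0.le hq1 (Nat.succ_ne_zero k)
  simp only [Nat.succ_eq_add_one] at this
  linarith

lemma bzF_succ (q : ℝ) (n : ℕ) : bzF q (n + 1) = bzF q n * (1 - q ^ (n + 1)) := by
  simp [bzF, Finset.prod_range_succ]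

lemma bzF_anti {q : ℝ} (hq0 : 0 < q) (hq1 : q < 1) : Antitone (bzF q) := by
  apply antitone_nat_of_succ_le
  intro n
  rw [bzF_succ]
  have := bzF_pos hq0 hq1 n
  have h2 : 0 < q ^ (n + 1) := by positivity
  nlinarith

lemma bzG_sub {q : ℝ} (hq0 : 0 < q) (hq1 : q < 1) (n : ℤ) :
    bzG q (n - 1) = bzG q n * (1 - q ^ n) := by
  rcases lt_trichotomy n 0 with h | h | h
  · simp [bzG, h, show n - 1 < 0 by omega]
  · subst h; simp [bzG]
  · obtain ⟨k, rfl⟩ : ∃ k : ℕ, n = (k + 1 : ℕ) := ⟨(n - 1).toNat, by omega⟩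
    have h1 : ((k + 1 : ℕ) : ℤ) - 1 = (k : ℤ) := by push_cast; ring
    have hp := bzF_pos hq0 hq1 k
    have hp' := bzF_pos hq0 hq1 (k + 1)
    rw [h1, zpow_natCast]
    unfold bzG
    rw [if_neg (by omega), if_neg (by omega), Int.toNat_natCast, Int.toNat_natCast]
    have e := bzF_succ q k
    field_simp
    linarith

lemma bzW_succ {q : ℝ} (hq0 : 0 < q) (j : ℤ) : bzW q (j + 1) = bzW q j * (q ^ j * q) := by
  unfold bzW
  rw [← Real.rpow_intCast, ← Real.rpow_add_one hq0.ne', ← Real.rpow_add hq0]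
  congr 1
  push_cast
  ring

lemma bzA_succ {q : ℝ} (hq0 : 0 < q) (hq1 : q < 1) (m : ℕ) (j : ℤ) :
    bzA q (m + 1) j = q ^ (m + 1) * bzA q m (j - 1) + (1 + q ^ (2 * m + 2)) * bzA q m j
      + q ^ (m + 1) * bzA q m (j + 1) := by
  have hw1 := bzW_succ hq0 j
  have hw0 := bzW_succ hq0 (j - 1)
  rw [sub_add_cancel] at hw0
  have g1 := bzG_sub hq0 hq1 ((m : ℤ) + 1 - j)
  have g2 := bzG_sub hq0 hq1 ((m : ℤ) - j)
  have g3 := bzG_sub hq0 hq1 ((m : ℤ) + 2 + j)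
  have g4 := bzG_sub hq0 hq1 ((m : ℤ) + 1 + j)
  rw [show (m : ℤ) + 1 - j - 1 = m - j by ring] at g1
  rw [show (m : ℤ) + 2 + j - 1 = m + 1 + j by ring] at g3
  rw [show (m : ℤ) + 1 + j - 1 = m + j by ring] at g4
  have hqn := hq0.ne'
  have hv : q ^ j ≠ 0 := zpow_ne_zero _ hqn
  rw [zpow_sub₀ hqn, zpow_add₀ hqn] at g1
  rw [zpow_sub₀ hqn] at g2
  rw [zpow_add₀ hqn, zpow_add₀ hqn] at g3 g4
  rw [zpow_sub₀ hqn] at hw0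
  simp only [zpow_natCast, zpow_one, zpow_ofNat] at g1 g2 g3 g4 hw0
  have hw0' : bzW q (j - 1) = bzW q j / q ^ j := by
    rw [hw0]; field_simp
  unfold bzA
  rw [show 2 * (m + 1) + 1 = 2 * m + 1 + 1 + 1 by ring, bzF_succ, bzF_succ]
  push_cast
  rw [show (m : ℤ) + 1 + 1 + j = m + 2 + j by ring,
    show (m : ℤ) - (j - 1) = m + 1 - j by ring,
    show (m : ℤ) + 1 + (j - 1) = m + j by ring,
    show (m : ℤ) - (j + 1) = m - j - 1 by ring,
    show (m : ℤ) + 1 + (j + 1) = m + 2 + j by ring, hw1, hw0', g2, g4, g1, g3]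
  field_simp
  ring

lemma bzA_hasSum {q : ℝ} (hq0 : 0 < q) (hq1 : q < 1) (m : ℕ) :
    HasSum (bzA q m) (2 * q ^ (1 / 8 : ℝ) * ∏ k ∈ Finset.range m, (1 + q ^ (k + 1)) ^ 2) := by
  induction m with
  | zero =>
    have h1 : (1 : ℝ) - q ≠ 0 := by linarith
    have h : HasSum (bzA q 0) (∑ j ∈ ({-1, 0} : Finset ℤ), bzA q 0 j) := by
      apply hasSum_sum_of_ne_finset_zero
      intro j hj
      simp only [Finset.mem_insert, Finset.mem_singleton, not_or] at hj
      rcases lt_or_gt_of_ne hj.2 with h | h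
      · have : (1 : ℤ) + j < 0 := by omega
        simp [bzA, bzG, this]
      · simp [bzA, bzG, h]
    convert h using 1
    rw [Finset.sum_pair (by norm_num)]
    have e1 : bzA q 0 0 = q ^ (1 / 8 : ℝ) := by
      simp [bzA, bzG, bzF, bzW, h1]; norm_num
    have e2 : bzA q 0 (-1) = q ^ (1 / 8 : ℝ) := by
      simp [bzA, bzG, bzF, bzW, h1]; norm_num
    rw [e1, e2]; simp; ring
  | succ m ih =>
    have s1 := (Equiv.addRight (1 : ℤ)).hasSum_iff.mpr ih
    have s2 := (Equiv.subRight (1 : ℤ)).hasSum_iff.mpr ih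
    have := ((s2.mul_left (q ^ (m + 1))).add (ih.mul_left (1 + q ^ (2 * m + 2)))).add
      (s1.mul_left (q ^ (m + 1)))
    have hf : bzA q (m + 1) = fun b =>
        q ^ (m + 1) * (bzA q m ∘ (Equiv.subRight (1 : ℤ))) b + (1 + q ^ (2 * m + 2)) * bzA q m b
          + q ^ (m + 1) * (bzA q m ∘ (Equiv.addRight (1 : ℤ))) b := by
      funext j
      simpa using bzA_succ hq0 hq1 m j
    rw [hf, show 2 * q ^ (1 / 8 : ℝ) * ∏ k ∈ Finset.range (m + 1), (1 + q ^ (k + 1)) ^ 2 =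
      q ^ (m + 1) * (2 * q ^ (1 / 8 : ℝ) * ∏ k ∈ Finset.range m, (1 + q ^ (k + 1)) ^ 2) +
        (1 + q ^ (2 * m + 2)) *
          (2 * q ^ (1 / 8 : ℝ) * ∏ k ∈ Finset.range m, (1 + q ^ (k + 1)) ^ 2) +
      q ^ (m + 1) * (2 * q ^ (1 / 8 : ℝ) * ∏ k ∈ Finset.range m, (1 + q ^ (k + 1)) ^ 2) by
        rw [Finset.prod_range_succ]; ring]
    exact this

lemma bzW_summable {q : ℝ} (hq0 : 0 < q) (hq1 : q < 1) : Summable (bzW q) := by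
  have hs : Summable fun n : ℕ => q ^ (-(1 / 2) : ℝ) * (q ^ (1 / 2 : ℝ)) ^ n := by
    apply Summable.mul_left
    apply summable_geometric_of_lt_one (by positivity)
    exact Real.rpow_lt_one hq0.le hq1 (by norm_num)
  have key : ∀ (n : ℕ) (x : ℝ), (n : ℝ) - 1 ≤ (x + 1 / 2) ^ 2 →
      q ^ ((1 / 2 : ℝ) * (x + 1 / 2) ^ 2) ≤ q ^ (-(1 / 2) : ℝ) * (q ^ (1 / 2 : ℝ)) ^ n := by
    intro n x h
    rw [← Real.rpow_natCast (q ^ (1 / 2 : ℝ)) n, ← Real.rpow_mul hq0.le, ← Real.rpow_add hq0]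
    apply Real.rpow_le_rpow_of_exponent_ge hq0 hq1.le
    linarith
  apply Summable.of_nat_of_neg
  · refine Summable.of_nonneg_of_le (fun n => (Real.rpow_pos_of_pos hq0 _).le) (fun n => ?_) hs
    apply key
    push_cast
    nlinarith [sq_nonneg (n : ℝ)]
  · refine Summable.of_nonneg_of_le (fun n => (Real.rpow_pos_of_pos hq0 _).le) (fun n => ?_) hs
    apply key
    push_cast
    nlinarith [sq_nonneg ((n : ℝ) - 1)]

end helpers

open Filter Topology in
/-- The limiting form of the finite identity. -/
lemma bz_main (q : ℝ) (hq0 : 0 < q) (hq1 : q < 1) :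
    2 * q ^ (1 / 8 : ℝ) * ∏' k : ℕ, (1 + q ^ (k + 1)) ^ 2 =
      (∑' n : ℤ, bzW q n) / ∏' k : ℕ, (1 - q ^ (k + 1)) := by
  have hs : Summable fun k : ℕ => q ^ (k + 1) :=
    (summable_nat_add_iff 1).mpr (summable_geometric_of_lt_one hq0.le hq1)
  have hm1 : Multipliable fun k : ℕ => (1 + q ^ (k + 1)) :=
    Real.multipliable_one_add_of_summable hs
  have hm1' : Multipliable fun k : ℕ => (1 + q ^ (k + 1)) ^ 2 := by
    simpa only [sq] using hm1.mul hm1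
  have hm2 : Multipliable fun k : ℕ => (1 - q ^ (k + 1)) := by
    simpa only [sub_eq_add_neg] using Real.multipliable_one_add_of_summable hs.neg
  have hFt : Tendsto (bzF q) atTop (𝓝 (∏' k : ℕ, (1 - q ^ (k + 1)))) :=
    hm2.tendsto_prod_tprod_nat
  have hne : ∏' k : ℕ, (1 - q ^ (k + 1)) ≠ 0 := by
    have := tprod_one_add_ne_zero_of_summable (f := fun k : ℕ => -q ^ (k + 1)) (by
      intro k
      have := pow_lt_one₀ hq0.le hq1 (Nat.succ_ne_zero k)
      simp only [Nat.succ_eq_add_one] at this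
      linarith) hs.neg.norm
    simpa only [sub_eq_add_neg] using this
  set L := ∏' k : ℕ, (1 - q ^ (k + 1)) with hL
  have hLle : ∀ n, L ≤ bzF q n := fun n => (bzF_anti hq0 hq1).le_of_tendsto hFt n
  have hLpos : 0 < L :=
    lt_of_le_of_ne (ge_of_tendsto' hFt fun n => (bzF_pos hq0 hq1 n).le) hne.symm
  have hG0 : ∀ n, 0 ≤ bzG q n := by
    intro n
    unfold bzG
    split_ifs
    · exact le_rfl
    · exact (inv_pos.mpr (bzF_pos hq0 hq1 _)).le
  have hG1 : ∀ n, bzG q n ≤ L⁻¹ := by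
    intro n
    unfold bzG
    split_ifs
    · exact (inv_pos.mpr hLpos).le
    · exact inv_anti₀ hLpos (hLle _)
  have hGt : ∀ c : ℤ, Tendsto (fun m : ℕ => bzG q ((m : ℤ) + c)) atTop (𝓝 L⁻¹) := by
    intro c
    have h1 : Tendsto (fun m : ℕ => ((m : ℤ) + c).toNat) atTop atTop := by
      apply tendsto_atTop.mpr
      intro b
      filter_upwards [eventually_ge_atTop (b + c.natAbs)] with m hm
      omega
    have h2 := (hFt.comp h1).inv₀ hne
    refine h2.congr' ?_
    filter_upwards [eventually_ge_atTop c.natAbs] with m hm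
    have : ¬ ((m : ℤ) + c < 0) := by omega
    simp [bzG, this]
  have hF1 : ∀ n, bzF q n ≤ 1 := fun n => by
    simpa [bzF] using bzF_anti hq0 hq1 (Nat.zero_le n)
  have hW0 : ∀ j, 0 < bzW q j := fun j => Real.rpow_pos_of_pos hq0 _
  have hlim : Tendsto (fun m => ∑' j, bzA q m j) atTop (𝓝 (∑' j, L⁻¹ * bzW q j)) := by
    apply tendsto_tsum_of_dominated_convergence (bound := fun j => 1 * L⁻¹ * L⁻¹ * bzW q j)
    · exact (bzW_summable hq0 hq1).mul_left _
    · intro j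
      have hF2 : Tendsto (fun m : ℕ => bzF q (2 * m + 1)) atTop (𝓝 L) :=
        hFt.comp (tendsto_atTop.mpr fun b => by
          filter_upwards [eventually_ge_atTop b] with m hm
          omega)
      have := ((hF2.mul (hGt (-j))).mul (hGt (1 + j))).mul_const (bzW q j)
      rw [mul_inv_cancel₀ hne, one_mul] at this
      simpa only [bzA, sub_eq_add_neg, add_assoc] using this
    · refine Eventually.of_forall fun m j => ?_
      have hFp := (bzF_pos hq0 hq1 (2 * m + 1)).le
      have hLi := (inv_pos.mpr hLpos).le
      unfold bzA
      rw [Real.norm_of_nonneg (mul_nonneg (mul_nonneg (mul_nonneg hFp (hG0 _)) (hG0 _))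
        (hW0 j).le)]
      apply mul_le_mul_of_nonneg_right _ (hW0 j).le
      apply mul_le_mul _ (hG1 _) (hG0 _) (by positivity)
      exact mul_le_mul (hF1 _) (hG1 _) (hG0 _) zero_le_one
  have hlim2 := hm1'.tendsto_prod_tprod_nat.const_mul (2 * q ^ (1 / 8 : ℝ))
  simp only [(bzA_hasSum hq0 hq1 _).tsum_eq] at hlim
  rw [tendsto_nhds_unique hlim2 hlim, tsum_mul_left]
  field_simp

/-- Bosonization of two Ramond fermions (Jacobi triple product consequence):
    `2·∏_{k=1}^∞ (1+q^k)² = q^(−1/8) · (∑_{n∈ℤ} q^((1/2)(n+1/2)²)) / ∏_{k=1}^∞ (1−q^k)`. -/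
theorem stmt6 (q : ℝ) (hq0 : 0 < q) (hq1 : q < 1) :
    2 * ∏' k : ℕ, (1 + q ^ (k + 1)) ^ 2 =
      q ^ (-(1 / 8) : ℝ) * (∑' n : ℤ, q ^ ((1 / 2 : ℝ) * ((n : ℝ) + 1 / 2) ^ 2)) /
        ∏' k : ℕ, (1 - q ^ (k + 1)) := by
  have h := bz_main q hq0 hq1
  unfold bzW at h
  rw [mul_div_assoc, ← h, Real.rpow_neg hq0.le]
  have : q ^ (1 / 8 : ℝ) ≠ 0 := (Real.rpow_pos_of_pos hq0 _).ne'
  field_simp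
end

section
/- For every real q with 0 < q < 1 one has 2·q^(1/8) / ∏_{k=0}^∞ (1 − q^(k+1/2))² = (∑_{k,n∈ℤ} q^(n²/2 + (k+1/2)²/2)) / ∏_{n=1}^∞ (1 − q^n)². -/
open scoped BigOperators

namespace TwistedAux

open Filter Topology Finset

/-- Gaussian binomial coefficients. -/
noncomputable def G (y : ℝ) : ℕ → ℕ → ℝ
  | _, 0 => 1
  | 0, _ + 1 => 0
  | n + 1, k + 1 => y ^ (k + 1) * G y n (k + 1) + G y n k

lemma G_zero_right (y : ℝ) (n : ℕ) : G y n 0 = 1 := by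
  cases n <;> simp [G]

lemma G_succ (y : ℝ) (n k : ℕ) :
    G y (n + 1) (k + 1) = y ^ (k + 1) * G y n (k + 1) + G y n k := by
  simp [G]

lemma G_of_lt (y : ℝ) : ∀ n k : ℕ, n < k → G y n k = 0 := by
  intro n
  induction n with
  | zero =>
    intro k hk
    obtain ⟨k, rfl⟩ : ∃ j, k = j + 1 := ⟨k - 1, by omega⟩
    simp [G]
  | succ n ih =>
    intro k hk
    obtain ⟨k, rfl⟩ : ∃ j, k = j + 1 := ⟨k - 1, by omega⟩
    rw [G_succ, ih _ (by omega), ih _ (by omega)]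
    simp

/-- Finite products. -/
noncomputable def P (y : ℝ) (n : ℕ) : ℝ := ∏ i ∈ range n, (1 - y ^ (i + 1))

lemma P_succ (y : ℝ) (n : ℕ) : P y (n + 1) = P y n * (1 - y ^ (n + 1)) := by
  simp [P, prod_range_succ]

lemma G_self (y : ℝ) (n : ℕ) : G y n n = 1 := by
  induction n with
  | zero => simp [G]
  | succ n ih => rw [G_succ, ih, G_of_lt y n (n + 1) (by omega)]; simp

lemma G_mul (y : ℝ) : ∀ N a b : ℕ, a + b = N → G y N a * (P y a * P y b) = P y N := by
  intro N
  induction N with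
  | zero =>
    intro a b h
    have ha : a = 0 := by omega
    have hb : b = 0 := by omega
    subst ha hb
    simp [G, P]
  | succ N ih =>
    intro a b h
    rcases Nat.eq_zero_or_pos a with ha | ha
    · subst ha
      have hb : b = N + 1 := by omega
      subst hb
      simp [G, P]
    rcases Nat.eq_zero_or_pos b with hb | hb
    · subst hb
      have hb : a = N + 1 := by omega
      subst hb
      rw [G_self]
      simp [P]
    obtain ⟨a, rfl⟩ : ∃ j, a = j + 1 := ⟨a - 1, by omega⟩
    obtain ⟨b, rfl⟩ : ∃ j, b = j + 1 := ⟨b - 1, by omega⟩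
    have h1 := ih (a + 1) b (by omega)
    have h2 := ih a (b + 1) (by omega)
    have hN : N = a + b + 1 := by omega
    rw [G_succ, P_succ y N]
    calc _ = y ^ (a + 1) * (G y N (a + 1) * (P y (a + 1) * P y b)) * (1 - y ^ (b + 1))
          + (1 - y ^ (a + 1)) * (G y N a * (P y a * P y (b + 1))) := by
            rw [P_succ y a, P_succ y b]; ring
      _ = _ := by
        rw [h1, h2, hN]; ring

lemma qbinom (x : ℝ) (n : ℕ) : ∀ z : ℝ,
    ∏ i ∈ range n, (1 + z * x ^ (2 * i + 1)) =
      ∑ k ∈ range (n + 1), G (x ^ 2) n k * x ^ (k ^ 2) * z ^ k := by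
  induction n with
  | zero => intro z; simp [G]
  | succ n ih =>
    intro z
    rw [prod_range_succ']
    have h1 : ∏ i ∈ range n, (1 + z * x ^ (2 * (i + 1) + 1))
        = ∏ i ∈ range n, (1 + (z * x ^ 2) * x ^ (2 * i + 1)) := by
      refine prod_congr rfl fun i _ => ?_
      ring
    rw [h1, ih, sum_range_succ' _ (n + 1)]
    simp only [G_succ, G_zero_right]
    have h2 : ∑ k ∈ range (n + 1), (((x ^ 2) ^ (k + 1) * G (x ^ 2) n (k + 1) + G (x ^ 2) n k)
          * x ^ ((k + 1) ^ 2) * z ^ (k + 1))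
        = ∑ k ∈ range (n + 1), (G (x ^ 2) n (k + 1) * x ^ ((k + 1) ^ 2) * (z * x ^ 2) ^ (k + 1))
        + z * x * ∑ k ∈ range (n + 1), (G (x ^ 2) n k * x ^ (k ^ 2) * (z * x ^ 2) ^ k) := by
      rw [mul_sum, ← sum_add_distrib]
      refine sum_congr rfl fun k _ => ?_
      ring
    rw [h2]
    have h3 := sum_range_succ' (fun k => G (x ^ 2) n k * x ^ (k ^ 2) * (z * x ^ 2) ^ k) (n + 1)
    rw [sum_range_succ, G_of_lt _ n (n + 1) (by omega)] at h3
    simp only [G_zero_right] at h3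
    simp only [mul_zero, zero_add, pow_one, pow_zero, ne_eq, OfNat.ofNat_ne_zero,
      not_false_eq_true, zero_pow, mul_one, zero_mul, add_zero] at h3 ⊢
    linear_combination h3

lemma finite_jtp (x : ℝ) (hx : x ≠ 0) (m : ℕ) : ∀ (n : ℕ) (z : ℝ), z ≠ 0 →
    (∏ i ∈ range n, (1 + z * x ^ (2 * i + 1))) * ∏ i ∈ range m, (1 + z⁻¹ * x ^ (2 * i + 1)) =
      ∑ k ∈ range (n + m + 1), G (x ^ 2) (n + m) k *
        (x ^ (((k : ℤ) - m) ^ 2) * z ^ ((k : ℤ) - m)) := by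
  induction m with
  | zero =>
    intro n z hz
    rw [range_zero, prod_empty, mul_one, qbinom]
    refine sum_congr rfl fun k _ => ?_
    have h : ((k : ℤ) - (0 : ℕ)) ^ 2 = ((k ^ 2 : ℕ) : ℤ) := by push_cast; ring
    rw [h]
    rw [zpow_natCast]
    simp [mul_assoc]
  | succ m ih =>
    intro n z hz
    have h := ih (n + 1) (z * x⁻¹ ^ 2) (by positivity)
    rw [prod_range_succ'] at h
    rw [prod_range_succ']
    have e1 : ∏ i ∈ range n, (1 + z * x⁻¹ ^ 2 * x ^ (2 * (i + 1) + 1))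
        = ∏ i ∈ range n, (1 + z * x ^ (2 * i + 1)) := by
      refine prod_congr rfl fun i _ => ?_
      field_simp
      ring
    have e2 : ∏ i ∈ range m, (1 + (z * x⁻¹ ^ 2)⁻¹ * x ^ (2 * i + 1))
        = ∏ i ∈ range m, (1 + z⁻¹ * x ^ (2 * (i + 1) + 1)) := by
      refine prod_congr rfl fun i _ => ?_
      field_simp
      ring
    rw [e1, e2] at h
    have e3 : n + (m + 1) = n + 1 + m := by ring
    rw [e3]
    have e4 : ∑ k ∈ range (n + 1 + m + 1), G (x ^ 2) (n + 1 + m) k *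
        (x ^ (((k : ℤ) - (m + 1 : ℕ)) ^ 2) * z ^ ((k : ℤ) - (m + 1 : ℕ)))
        = (x * z⁻¹) * ∑ k ∈ range (n + 1 + m + 1), G (x ^ 2) (n + 1 + m) k *
        (x ^ (((k : ℤ) - m) ^ 2) * (z * x⁻¹ ^ 2) ^ ((k : ℤ) - m)) := by
      rw [mul_sum]
      refine sum_congr rfl fun k _ => ?_
      have a1 : ((k : ℤ) - (m + 1 : ℕ)) ^ 2 = ((k : ℤ) - m) ^ 2 + (1 + (-2) * ((k : ℤ) - m)) := by
        push_cast; ring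
      have a2 : (k : ℤ) - (m + 1 : ℕ) = ((k : ℤ) - m) + (-1) := by push_cast; ring
      have a3 : (x⁻¹ ^ 2 : ℝ) = x ^ (-2 : ℤ) := by
        rw [zpow_neg]; simp [zpow_ofNat]
      rw [a1, a2, zpow_add₀ hx, zpow_add₀ hx, zpow_add₀ hz, mul_zpow, a3, zpow_mul, zpow_one,
        zpow_neg_one]
      ring
    rw [e4, ← h]
    field_simp
    ring

lemma G_bound (y A : ℝ) (hA : 0 < A) (h1 : ∀ n, A ≤ P y n) (h2 : ∀ n, P y n ≤ 1) (N k : ℕ) :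
    |G y N k| ≤ (A * A)⁻¹ := by
  rcases Nat.lt_or_ge N k with h | h
  · rw [G_of_lt y N k h]; simp; positivity
  have h3 := G_mul y N k (N - k) (by omega)
  have hk : 0 < P y k := hA.trans_le (h1 k)
  have hk' : 0 < P y (N - k) := hA.trans_le (h1 _)
  have hN : 0 < P y N := hA.trans_le (h1 _)
  have h4 : G y N k = P y N * (P y k * P y (N - k))⁻¹ := by
    rw [← h3]; field_simp
  rw [h4, abs_of_pos (by positivity)]
  have h5 : (P y k * P y (N - k))⁻¹ ≤ (A * A)⁻¹ := by
    apply inv_anti₀ (by positivity)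
    exact mul_le_mul (h1 _) (h1 _) hA.le hk.le
  calc _ ≤ 1 * (A * A)⁻¹ := mul_le_mul (h2 N) h5 (by positivity) (by norm_num)
    _ = _ := one_mul _

lemma jtp_lim (x z A : ℝ) (hx : 0 < x) (hz : 0 < z)
    (hs : Summable fun j : ℤ => x ^ (j ^ 2) * z ^ j) (hA : 0 < A)
    (hP : Tendsto (P (x ^ 2)) atTop (𝓝 A))
    (h1 : ∀ n, A ≤ P (x ^ 2) n) (h2 : ∀ n, P (x ^ 2) n ≤ 1) :
    Tendsto (fun n => (∏ i ∈ range n, (1 + z * x ^ (2 * i + 1))) *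
      ∏ i ∈ range n, (1 + z⁻¹ * x ^ (2 * i + 1))) atTop
      (𝓝 (∑' j : ℤ, A⁻¹ * (x ^ (j ^ 2) * z ^ j))) := by
  have key : ∀ n : ℕ, (∏ i ∈ range n, (1 + z * x ^ (2 * i + 1))) *
      ∏ i ∈ range n, (1 + z⁻¹ * x ^ (2 * i + 1)) =
      ∑' j : ℤ, (if 0 ≤ j + n then G (x ^ 2) (n + n) (j + n).toNat else 0) *
        (x ^ (j ^ 2) * z ^ j) := by
    intro n
    rw [finite_jtp x hx.ne' n n z hz.ne']
    have hinj : Function.Injective (fun k : ℕ => (k : ℤ) - n) := by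
      intro a b h
      simpa using h
    rw [← hinj.tsum_eq]
    · rw [tsum_eq_sum (s := range (n + n + 1))]
      · refine sum_congr rfl fun k _ => ?_
        simp
      · intro k hk
        rw [mem_range] at hk
        simp [G_of_lt (x ^ 2) (n + n) k (by omega)]
    · intro j hj
      by_cases h : 0 ≤ j + n
      · exact ⟨(j + n).toNat, by simp [h]⟩
      · simp [h] at hj
  simp_rw [key]
  refine tendsto_tsum_of_dominated_convergence (hs.mul_left (A * A)⁻¹) ?_ ?_
  · intro j
    refine Tendsto.mul_const _ ?_
    have e : (fun n : ℕ => P (x ^ 2) (n + n) *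
        (P (x ^ 2) (j + n).toNat * P (x ^ 2) (n - j).toNat)⁻¹) =ᶠ[atTop]
        (fun n : ℕ => if 0 ≤ j + n then G (x ^ 2) (n + n) (j + n).toNat else 0) := by
      filter_upwards [eventually_ge_atTop j.natAbs] with n hn
      have hj : 0 ≤ j + n := by omega
      rw [if_pos hj, ← G_mul (x ^ 2) (n + n) (j + n).toNat (n - j).toNat (by omega)]
      have a1 := hA.trans_le (h1 (j + n).toNat)
      have a2 := hA.trans_le (h1 (n - j).toNat)
      field_simp
    refine Tendsto.congr' e ?_
    have t1 : Tendsto (fun n : ℕ => n + n) atTop atTop :=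
      tendsto_atTop_mono (fun n => by simp only [id]; omega) tendsto_id
    have t2 : Tendsto (fun n : ℕ => (j + n).toNat) atTop atTop := by
      rw [tendsto_atTop]
      intro b
      filter_upwards [eventually_ge_atTop (j.natAbs + b)] with n hn
      omega
    have t3 : Tendsto (fun n : ℕ => (n - j).toNat) atTop atTop := by
      rw [tendsto_atTop]
      intro b
      filter_upwards [eventually_ge_atTop (j.natAbs + b)] with n hn
      omega
    have := (hP.comp t1).mul (((hP.comp t2).mul (hP.comp t3)).inv₀ (by positivity))
    have e2 : A * (A * A)⁻¹ = A⁻¹ := by field_simp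
    rw [e2] at this
    exact this
  · refine Eventually.of_forall fun n j => ?_
    have hp : 0 < x ^ (j ^ 2) * z ^ j := by positivity
    rw [norm_mul, Real.norm_eq_abs, Real.norm_eq_abs, abs_of_pos hp]
    refine mul_le_mul_of_nonneg_right ?_ hp.le
    split_ifs
    · exact G_bound _ A hA h1 h2 _ _
    · simp; positivity

lemma summable_abs (x : ℝ) (hx : 0 < x) (hx1 : x < 1) :
    Summable fun j : ℤ => x ^ j.natAbs := by
  apply Summable.of_nat_of_neg
  · simpa using summable_geometric_of_lt_one hx.le hx1
  · simpa using summable_geometric_of_lt_one hx.le hx1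

lemma summable_one (x : ℝ) (hx : 0 < x) (hx1 : x < 1) :
    Summable fun j : ℤ => x ^ (j ^ 2) := by
  refine Summable.of_nonneg_of_le (fun j => by positivity) (fun j => ?_) (summable_abs x hx hx1)
  rw [← zpow_natCast]
  apply zpow_le_zpow_right_of_le_one₀ hx hx1.le
  rw [Int.natCast_natAbs, ← sq_abs]
  have := abs_nonneg j
  rcases this.eq_or_lt with h | h <;> nlinarith

lemma summable_two (x : ℝ) (hx : 0 < x) (hx1 : x < 1) :
    Summable fun j : ℤ => x ^ (j ^ 2) * x ^ j := by
  refine Summable.of_nonneg_of_le (fun j => by positivity) (fun j => ?_)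
    ((summable_abs x hx hx1).mul_left x⁻¹)
  rw [← zpow_natCast, ← zpow_add₀ hx.ne', ← zpow_neg_one, ← zpow_add₀ hx.ne']
  apply zpow_le_zpow_right_of_le_one₀ hx hx1.le
  rw [Int.natCast_natAbs]
  rcases abs_cases j with ⟨h, _⟩ | ⟨h, _⟩ <;> rw [h] <;> nlinarith

lemma prod_even_odd (f : ℕ → ℝ) (n : ℕ) :
    ∏ i ∈ range (2 * n), f i = (∏ i ∈ range n, f (2 * i)) * ∏ i ∈ range n, f (2 * i + 1) := by
  induction n with
  | zero => simp
  | succ n ih =>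
    rw [show 2 * (n + 1) = 2 * n + 1 + 1 by ring, prod_range_succ, prod_range_succ, ih,
      prod_range_succ, prod_range_succ]
    ring

lemma summ_geo (x : ℝ) (hx : 0 < x) (hx1 : x < 1) (g : ℕ → ℕ) (hg : ∀ n, n ≤ g n) :
    Summable fun n => x ^ g n :=
  Summable.of_nonneg_of_le (fun n => by positivity)
    (fun n => pow_le_pow_of_le_one hx.le hx1.le (hg n)) (summable_geometric_of_lt_one hx.le hx1)

lemma hasProd_sub (x : ℝ) (hx : 0 < x) (hx1 : x < 1) (g : ℕ → ℕ) (hg : ∀ n, n < g n) :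
    ∃ a : ℝ, 0 < a ∧ HasProd (fun n => 1 - x ^ g n) a := by
  have hs := (summ_geo x hx hx1 g (fun n => (hg n).le)).neg
  have hpos : ∀ n, 0 < 1 + -x ^ g n := fun n => by
    have := pow_lt_one₀ hx.le hx1 (n := g n) (by have := hg n; omega)
    linarith
  have hm := Real.multipliable_one_add_of_summable hs
  have hne : ∏' n, (1 + -x ^ g n) ≠ 0 :=
    tprod_one_add_ne_zero_of_summable (fun n => (hpos n).ne') hs.norm
  refine ⟨∏' n, (1 + -x ^ g n), lt_of_le_of_ne ?_ hne.symm, ?_⟩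
  · exact ge_of_tendsto' hm.hasProd.tendsto_prod_nat
      (fun n => prod_nonneg fun i _ => (hpos i).le)
  · simpa [sub_eq_add_neg] using hm.hasProd

lemma main (x : ℝ) (hx : 0 < x) (hx1 : x < 1) (A D : ℝ) (hA : 0 < A) (hD : 0 < D)
    (pA : HasProd (fun n : ℕ => 1 - x ^ (2 * n + 2)) A)
    (pD : HasProd (fun n : ℕ => 1 - x ^ (2 * n + 1)) D) :
    (∑' j : ℤ, x ^ (j ^ 2) * x ^ j) * (∑' j : ℤ, x ^ (j ^ 2)) = 2 * A ^ 2 / D ^ 2 := by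
  have tA := pA.tendsto_prod_nat
  have tD := pD.tendsto_prod_nat
  have eP : P (x ^ 2) = fun n => ∏ i ∈ range n, (1 - x ^ (2 * i + 2)) := by
    funext n
    refine prod_congr rfl fun i _ => ?_
    ring
  have tP : Tendsto (P (x ^ 2)) atTop (𝓝 A) := by rw [eP]; exact tA
  have hfac : ∀ i : ℕ, 0 < 1 - (x ^ 2) ^ (i + 1) ∧ 1 - (x ^ 2) ^ (i + 1) ≤ 1 := by
    intro i
    have h0 : 0 < (x ^ 2) ^ (i + 1) := by positivity
    have := pow_lt_one₀ (sq_nonneg x) (by nlinarith : x ^ 2 < 1) (n := i + 1) (by omega)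
    constructor <;> linarith
  have hP0 : ∀ n, 0 < P (x ^ 2) n := fun n => prod_pos fun i _ => (hfac i).1
  have hP1 : ∀ n, P (x ^ 2) n ≤ 1 := fun n =>
    prod_le_one (fun i _ => (hfac i).1.le) (fun i _ => (hfac i).2)
  have hanti : Antitone (P (x ^ 2)) := by
    refine antitone_nat_of_succ_le fun n => ?_
    rw [P_succ]
    exact mul_le_of_le_one_right (hP0 n).le (hfac n).2
  have hPA : ∀ n, A ≤ P (x ^ 2) n := fun n => hanti.le_of_tendsto tP n
  -- product of 1 + x^(i+1)
  have t2n : Tendsto (fun n : ℕ => 2 * n) atTop atTop :=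
    tendsto_atTop_mono (fun n => by simp only [id]; omega) tendsto_id
  obtain ⟨C, hC, pC⟩ := hasProd_sub x hx hx1 (fun n => n + 1) (fun n => by omega)
  have tC := pC.tendsto_prod_nat
  have hCAD : C = D * A := by
    refine tendsto_nhds_unique (tC.comp t2n) ((tD.mul tA).congr fun n => ?_)
    simp only [Function.comp]
    rw [prod_even_odd]
  have tB : Tendsto (fun n => ∏ i ∈ range n, (1 + x ^ (i + 1))) atTop (𝓝 D⁻¹) := by
    have := tP.div tC hC.ne'
    have e : A / C = D⁻¹ := by rw [hCAD]; field_simp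
    rw [e] at this
    refine this.congr fun n => ?_
    simp only [Pi.div_apply, P]
    rw [← prod_div_distrib]
    refine prod_congr rfl fun i _ => ?_
    have h := pow_lt_one₀ hx.le hx1 (n := i + 1) (by omega)
    have h' : 1 - x ^ (i + 1) ≠ 0 := by linarith
    field_simp
    ring
  have J1 := jtp_lim x 1 A hx one_pos (by simpa using summable_one x hx hx1) hA tP hPA hP1
  have J2 := jtp_lim x x A hx hx (summable_two x hx hx1) hA tP hPA hP1
  rw [tsum_mul_left] at J1 J2
  have tx : Tendsto (fun n : ℕ => 1 + x ^ (2 * n)) atTop (𝓝 1) := by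
    have := (tendsto_pow_atTop_nhds_zero_of_lt_one hx.le hx1).comp t2n
    simpa using this.const_add 1
  have L := (J1.mul J2).mul tx
  have R := ((tB.comp t2n).pow 2).const_mul 2
  have e : (A⁻¹ * ∑' j : ℤ, x ^ (j ^ 2) * 1 ^ j) * (A⁻¹ * ∑' j : ℤ, x ^ (j ^ 2) * x ^ j) * 1
      = 2 * (D⁻¹) ^ 2 := by
    refine tendsto_nhds_unique L (R.congr fun n => ?_)
    simp only [Function.comp]
    rw [prod_even_odd]
    have s1 := prod_range_succ (fun i => 1 + x ^ (2 * i)) n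
    rw [prod_range_succ'] at s1
    have s2 : ∏ i ∈ range n, (1 + x * x ^ (2 * i + 1)) = ∏ i ∈ range n, (1 + x ^ (2 * i + 1 + 1)) :=
      prod_congr rfl fun i _ => by ring
    have s3 : ∏ i ∈ range n, (1 + x⁻¹ * x ^ (2 * i + 1)) = ∏ i ∈ range n, (1 + x ^ (2 * i)) :=
      prod_congr rfl fun i _ => by field_simp; ring
    have s4 : ∏ i ∈ range n, (1 + x ^ (2 * (i + 1))) = ∏ i ∈ range n, (1 + x ^ (2 * i + 1 + 1)) :=
      prod_congr rfl fun i _ => by ring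
    rw [s4] at s1
    rw [s2, s3]
    simp only [one_mul, inv_one, mul_zero, pow_zero] at s1 ⊢
    linear_combination (∏ i ∈ range n, (1 + x ^ (2 * i + 1))) ^ 2 *
      (∏ i ∈ range n, (1 + x ^ (2 * i + 1 + 1))) * s1
  simp only [one_zpow, mul_one] at e
  field_simp at e ⊢
  linear_combination e

end TwistedAux

/-- Equivalence of twisted representations `[1]₋·[1]₋ ∼ [1,1]₊·[1,−1]₊`:
    `2·q^(1/8) / ∏_{k=0}^∞ (1 − q^(k+1/2))²
     = (∑_{k,n∈ℤ} q^(n²/2 + (k+1/2)²/2)) / ∏_{n=1}^∞ (1 − q^n)²`. -/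
theorem stmt8 (q : ℝ) (hq0 : 0 < q) (hq1 : q < 1) :
    2 * q ^ ((1 / 8 : ℝ)) / ∏' k : ℕ, (1 - q ^ ((k : ℝ) + 1 / 2)) ^ 2 =
      (∑' p : ℤ × ℤ, q ^ ((p.2 : ℝ) ^ 2 / 2 + ((p.1 : ℝ) + 1 / 2) ^ 2 / 2)) /
        ∏' n : ℕ, (1 - q ^ (n + 1)) ^ 2 := by
  set x : ℝ := q ^ (1 / 2 : ℝ) with hxdef
  have hx : 0 < x := by positivity
  have hx1 : x < 1 := Real.rpow_lt_one hq0.le hq1 (by norm_num)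
  have hrz : ∀ j : ℤ, x ^ j = q ^ ((j : ℝ) / 2) := by
    intro j
    rw [hxdef, ← Real.rpow_mul_intCast hq0.le]
    congr 1; ring
  have hrn : ∀ j : ℕ, x ^ j = q ^ ((j : ℝ) / 2) := by
    intro j
    have := hrz j
    simpa using this
  obtain ⟨A, hA, pA⟩ := TwistedAux.hasProd_sub x hx hx1 (fun n => 2 * n + 2) (fun n => by omega)
  obtain ⟨D, hD, pD⟩ := TwistedAux.hasProd_sub x hx hx1 (fun n => 2 * n + 1) (fun n => by omega)
  have hmain := TwistedAux.main x hx hx1 A D hA hD pA pD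
  have e1 : ∏' k : ℕ, (1 - q ^ ((k : ℝ) + 1 / 2)) ^ 2 = D ^ 2 := by
    rw [← (pD.pow 2).tprod_eq]
    refine tprod_congr fun k => ?_
    rw [hrn]
    congr 3; push_cast; ring
  have e2 : ∏' n : ℕ, (1 - q ^ (n + 1)) ^ 2 = A ^ 2 := by
    rw [← (pA.pow 2).tprod_eq]
    refine tprod_congr fun k => ?_
    rw [hrn]
    have h : ((2 * k + 2 : ℕ) : ℝ) / 2 = ((k + 1 : ℕ) : ℝ) := by push_cast; ring
    rw [h, Real.rpow_natCast]
  have e3 : ∑' p : ℤ × ℤ, q ^ ((p.2 : ℝ) ^ 2 / 2 + ((p.1 : ℝ) + 1 / 2) ^ 2 / 2)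
      = q ^ (1 / 8 : ℝ) * (2 * A ^ 2 / D ^ 2) := by
    rw [← hmain, tsum_mul_tsum_of_summable_norm (TwistedAux.summable_two x hx hx1).norm
      (TwistedAux.summable_one x hx hx1).norm, ← tsum_mul_left]
    refine tsum_congr fun p => ?_
    rw [hrz, hrz, hrz, ← Real.rpow_add hq0, ← Real.rpow_add hq0, ← Real.rpow_add hq0]
    congr 1; push_cast; ring
  rw [e1, e2, e3]
  field_simp
end
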